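/- arXiv:1704.08511 — 3 statements merged into one kernel-verified Lean document; each statement's English description precedes it below -/
import Mathlib

section
/- Fix N∈ℕ and a partition λ=(λ_1,…,λ_r). For every H-rim decomposition Θ=(θ_1,…,θ_r)∈Rim^λ_H there exists an H-pattern L=(l_1,…,l_r)∈H^N_λ with hd(l_i)=|θ_i| for all 1≤i≤r; moreover the map τ_H: Rim^λ_H → S^λ_H sending Θ to type(L) (equivalently, to the unique σ∈S_r with λ_{σ(i)}−σ(i)+i=|θ_i| for all i) is a well-defined bijection. -/
/-!
The proof encodes a partition `μ` with at most `k` rows by its beta-numbers `μ i - i`, `i < k`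
(rows are numbered from `0`). They are pairwise distinct and determine `μ` (`eq_of_betas`).

Let `μ` have at most `k` rows. Adding a possibly empty ribbon that starts at `(k, 0)` and reaches up
to row `p` leaves the rows above `p` alone and turns each row below `p` into the preceding row of
`μ` plus one box; this is the relation `Step` (`exists_step_of_ribbon`, `Step.ribbon`). In terms of
beta-numbers, one new number is inserted (`Step.betas`), and it equals the size of the ribbon minus
`k` (`Step.card`). Hence for an `H`-rim decomposition `Θ` the set of numbers `|Θ j| - j`, `j < r`,
is the set of beta-numbers of `λ`, and matching the two yields the permutation (`exists_perm`).

The sizes of the ribbons determine the beta-numbers of all partial unions, hence `Θ`; this is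
injectivity (`hRim_ext`). Conversely, a permutation is the type of an `H`-pattern exactly when all
the horizontal distances `λ (σ i) - σ i + i` are nonnegative. Inserting the numbers
`λ (σ k) - σ k ≥ -k` successively then builds a chain of partitions, whose consecutive differences
form an `H`-rim decomposition (`exists_hRim`); this is surjectivity.
-/

open scoped BigOperators

noncomputable section

namespace SMZ

/-- Box `(i,j)` (0-indexed) lies in the Young diagram of the partition `lam`. -/
def InDiag (lam : ℕ → ℕ) (p : ℕ × ℕ) : Prop := p.2 < lam p.1

/-- `(i,j)` is a corner of the Young diagram of `lam`. -/
def IsCorner (lam : ℕ → ℕ) (p : ℕ × ℕ) : Prop :=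
  InDiag lam p ∧ ¬ InDiag lam (p.1 + 1, p.2) ∧ ¬ InDiag lam (p.1, p.2 + 1)

/-- `lam` is the part function of a partition with exactly `r` positive parts. -/
def IsPartitionWith (r : ℕ) (lam : ℕ → ℕ) : Prop :=
  Antitone lam ∧ ∀ i, 0 < lam i ↔ i < r

/-- Semi-standard Young tableau of shape `lam`, normalized to be `0` off the diagram. -/
structure IsSSYT (lam : ℕ → ℕ) (m : ℕ × ℕ → ℕ) : Prop where
  zero_off : ∀ p, ¬ InDiag lam p → m p = 0
  pos : ∀ p, InDiag lam p → 0 < m p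
  row_le : ∀ i j, InDiag lam (i, j + 1) → m (i, j) ≤ m (i, j + 1)
  col_lt : ∀ i j, InDiag lam (i + 1, j) → m (i, j) < m (i + 1, j)

/-- The summand `1 / M^s` of the Schur multiple zeta series. -/
def term (r : ℕ) (lam : ℕ → ℕ) (s : ℕ × ℕ → ℂ) (m : ℕ × ℕ → ℕ) : ℂ :=
  ∏ i ∈ Finset.range r, ∏ j ∈ Finset.range (lam i), (m (i, j) : ℂ) ^ (-(s (i, j)))

/-- The Schur multiple zeta function `ζ_λ(s)`. -/
def schurZeta (r : ℕ) (lam : ℕ → ℕ) (s : ℕ × ℕ → ℂ) : ℂ :=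
  ∑' M : {m : ℕ × ℕ → ℕ // IsSSYT lam m}, term r lam s M.1

/-- The region `W_λ` of (sufficient) absolute convergence. -/
def MemW (lam : ℕ → ℕ) (s : ℕ × ℕ → ℂ) : Prop :=
  (∀ p, InDiag lam p → 1 ≤ (s p).re) ∧ ∀ p, IsCorner lam p → 1 < (s p).re

/-- Euler–Zagier multiple zeta function. -/
def mzv {n : ℕ} (s : Fin n → ℂ) : ℂ :=
  ∑' f : {f : Fin n → ℕ // StrictMono f ∧ ∀ i, 0 < f i},
    ∏ i, (f.1 i : ℂ) ^ (-(s i))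

/-- Euler–Zagier multiple zeta-star function. -/
def mzvStar {n : ℕ} (s : Fin n → ℂ) : ℂ :=
  ∑' f : {f : Fin n → ℕ // Monotone f ∧ ∀ i, 0 < f i},
    ∏ i, (f.1 i : ℂ) ^ (-(s i))

/-- `ζ⋆(a start, a (start+1), …)` with `len` terms; `1` if `len = 0`, `0` if `len < 0`. -/
def mzvStarSeq (a : ℤ → ℂ) (start len : ℤ) : ℂ :=
  if len < 0 then 0 else mzvStar fun i : Fin len.toNat => a (start + (i : ℕ))

/-- `ζ(a start, a (start-1), …)` with `len` terms; `1` if `len = 0`, `0` if `len < 0`. -/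
def mzvSeqDesc (a : ℤ → ℂ) (start len : ℤ) : ℂ :=
  if len < 0 then 0 else mzv fun i : Fin len.toNat => a (start - (i : ℕ))

/-- The conjugate partition: `conjPart r lam c` is the number of rows `i < r` with a box
in column `c`, i.e. the (0-indexed) `c`-th part of `λ'`. -/
def conjPart (r : ℕ) (lam : ℕ → ℕ) (c : ℕ) : ℕ :=
  ((Finset.range r).filter fun i => c < lam i).card

end SMZ
namespace SMZ

/-- The Young diagram of `lam` (with `r` parts) as a finite set of (0-indexed) boxes. -/
def diagFinset (r : ℕ) (lam : ℕ → ℕ) : Finset (ℕ × ℕ) :=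
  (Finset.range r).biUnion fun i => (Finset.range (lam i)).image fun j => (i, j)

/-- Two boxes are (edge-)adjacent. -/
def Adjacent (p q : ℕ × ℕ) : Prop :=
  (p.1 = q.1 ∧ (p.2 + 1 = q.2 ∨ q.2 + 1 = p.2)) ∨
  (p.2 = q.2 ∧ (p.1 + 1 = q.1 ∨ q.1 + 1 = p.1))

/-- A finite set of boxes is connected (with respect to edge-adjacency). -/
def IsConnectedSet (R : Finset (ℕ × ℕ)) : Prop :=
  ∀ p ∈ R, ∀ q ∈ R, Relation.ReflTransGen (fun x y => x ∈ R ∧ y ∈ R ∧ Adjacent x y) p q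

/-- A ribbon: a nonempty connected set of boxes containing no `2 × 2` block. -/
def IsRibbonSet (R : Finset (ℕ × ℕ)) : Prop :=
  R.Nonempty ∧ IsConnectedSet R ∧
    ∀ i j : ℕ, ¬ ((i, j) ∈ R ∧ (i + 1, j) ∈ R ∧ (i, j + 1) ∈ R ∧ (i + 1, j + 1) ∈ R)

/-- A finite set of boxes is the Young diagram of a partition (downward/leftward closed). -/
def IsYoungSet (S : Finset (ℕ × ℕ)) : Prop :=
  (∀ i j : ℕ, (i, j + 1) ∈ S → (i, j) ∈ S) ∧ ∀ i j : ℕ, (i + 1, j) ∈ S → (i, j) ∈ S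

/-- The ribbon `R` starts at the box `b` (its box of minimal content). -/
def StartsAt (R : Finset (ℕ × ℕ)) (b : ℕ × ℕ) : Prop :=
  b ∈ R ∧ ∀ p ∈ R, ((b.2 : ℤ) - (b.1 : ℤ)) ≤ ((p.2 : ℤ) - (p.1 : ℤ))

/-- An `H`-rim decomposition of the partition `lam` with `r` parts: a sequence of (possibly
empty) ribbons, pairwise disjoint, whose partial unions are Young diagrams, whose total
union is the diagram of `lam`, and whose `i`-th member, if nonempty, starts at box `(i,1)`
(0-indexed: `(i,0)`). -/
def IsHRim (r : ℕ) (lam : ℕ → ℕ) (Θ : Fin r → Finset (ℕ × ℕ)) : Prop :=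
  (∀ k, Θ k = ∅ ∨ IsRibbonSet (Θ k)) ∧
  (∀ k l, k ≠ l → Disjoint (Θ k) (Θ l)) ∧
  (∀ k, IsYoungSet ((Finset.Iic k).biUnion Θ)) ∧
  (Finset.univ.biUnion Θ = diagFinset r lam) ∧
  ∀ k, (Θ k).Nonempty → StartsAt (Θ k) ((k : ℕ), 0)

/-- A lattice path on `ℤ²` with unit steps to the right or up. -/
def IsLatticePath (p : List (ℤ × ℤ)) : Prop :=
  List.Chain' (fun a b => b = (a.1 + 1, a.2) ∨ b = (a.1, a.2 + 1)) p

/-- The set of lattice paths from `A` to `B`. -/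
def PathSet (A B : ℤ × ℤ) : Set (List (ℤ × ℤ)) :=
  {p | IsLatticePath p ∧ p.head? = some A ∧ p.getLast? = some B}

/-- The number of horizontal steps of a path. -/
def horizSteps (p : List (ℤ × ℤ)) : ℕ :=
  (p.zip p.tail).countP fun ab => ab.2.1 == ab.1.1 + 1

/-- The starting points `A_i = (r+1-i, 1)` of `H`-patterns (here `i : Fin r` is 0-indexed). -/
def Apt (r : ℕ) (i : Fin r) : ℤ × ℤ := ((r : ℤ) - (i : ℕ), 1)

/-- The end points `B_i = (r+1-i+λ_i, N)` of `H`-patterns (0-indexed `i`). -/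
def Bpt (r N : ℕ) (lam : ℕ → ℕ) (i : Fin r) : ℤ × ℤ :=
  ((r : ℤ) - (i : ℕ) + (lam (i : ℕ) : ℤ), (N : ℤ))

/-- `S^λ_H`: the set of permutations arising as the type of an `H`-pattern for `lam`. -/
def HTypeSet (r N : ℕ) (lam : ℕ → ℕ) : Set (Equiv.Perm (Fin r)) :=
  {σ | ∀ i, ∃ p, p ∈ PathSet (Apt r i) (Bpt r N lam (σ i))}

end SMZ

namespace SMZ

/-! ### Lattice paths -/

lemma exists_path (m n : ℕ) : ∀ A : ℤ × ℤ,
    ∃ p ∈ PathSet A (A.1 + m, A.2 + n), horizSteps p = m := by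
  -- Prepending one step to a path, keeping track of the horizontal steps.
  have cons_step : ∀ (A Q B : ℤ × ℤ) (p : List (ℤ × ℤ)), p ∈ PathSet Q B →
      (Q = (A.1 + 1, A.2) ∨ Q = (A.1, A.2 + 1)) →
      A :: p ∈ PathSet A B ∧
        horizSteps (A :: p) = horizSteps p + if Q.1 = A.1 + 1 then 1 else 0 := by
    rintro A Q B p ⟨h1, h2, h3⟩ hQ
    cases p with
    | nil => simp at h2
    | cons q t =>
      simp only [List.head?_cons, Option.some.injEq] at h2
      subst h2
      refine ⟨⟨?_, rfl, ?_⟩, ?_⟩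
      · exact List.isChain_cons_cons.2 ⟨hQ, h1⟩
      · simpa using h3
      · simp [horizSteps, List.countP_cons]
  induction m with
  | zero =>
    induction n with
    | zero =>
      intro A
      exact ⟨[A], ⟨List.isChain_singleton A, by simp, by simp⟩, by simp [horizSteps]⟩
    | succ n ih =>
      intro A
      obtain ⟨p, hp, hh⟩ := ih (A.1, A.2 + 1)
      obtain ⟨h1, h2⟩ := cons_step A _ _ p hp (Or.inr rfl)
      refine ⟨A :: p, ?_, ?_⟩
      · convert h1 using 2
        ext <;> push_cast <;> ring
      · rw [h2, hh]; simp
  | succ m ih =>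
    intro A
    obtain ⟨p, hp, hh⟩ := ih (A.1 + 1, A.2)
    obtain ⟨h1, h2⟩ := cons_step A _ _ p hp (Or.inl rfl)
    refine ⟨A :: p, ?_, ?_⟩
    · convert h1 using 2
      ext <;> push_cast <;> ring
    · rw [h2, hh]; simp

lemma path_fst_le (p : List (ℤ × ℤ)) : ∀ A B : ℤ × ℤ, p ∈ PathSet A B → A.1 ≤ B.1 := by
  induction p with
  | nil => rintro A B ⟨_, h, _⟩; simp at h
  | cons a t ih =>
    rintro A B ⟨h1, h2, h3⟩
    simp only [List.head?_cons, Option.some.injEq] at h2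
    subst h2
    cases t with
    | nil =>
      simp only [List.getLast?_singleton, Option.some.injEq] at h3
      rw [h3]
    | cons q t =>
      have h := List.isChain_cons_cons.1 h1
      have := ih q B ⟨h.2, rfl, by simpa using h3⟩
      rcases h.1 with h | h <;> rw [h] at this <;> simp only at this <;> omega

/-- If the horizontal distance from `A_i` to `B_j` is a natural number `n`, then some path joins
them with `n` horizontal steps; `hpath_nonneg` is the converse. -/
lemma exists_hpath {r N : ℕ} (hN : 0 < N) (lam : ℕ → ℕ) (i j : Fin r) (n : ℕ)
    (h : (lam j : ℤ) - (j : ℕ) + (i : ℕ) = n) :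
    ∃ p ∈ PathSet (Apt r i) (Bpt r N lam j), horizSteps p = n := by
  obtain ⟨p, hp, hh⟩ := exists_path n (N - 1) (Apt r i)
  refine ⟨p, ?_, hh⟩
  convert hp using 2
  ext
  · simp only [Bpt, Apt]; omega
  · simp only [Bpt, Apt]; omega

lemma hpath_nonneg {r N : ℕ} (lam : ℕ → ℕ) (i j : Fin r)
    (h : ∃ p, p ∈ PathSet (Apt r i) (Bpt r N lam j)) :
    0 ≤ (lam j : ℤ) - (j : ℕ) + (i : ℕ) := by
  obtain ⟨p, hp⟩ := h
  have := path_fst_le p _ _ hp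
  simp only [Bpt, Apt] at this
  omega

/-! ### Ribbons and beta-numbers -/

/-- `Step k p μ μ'` says that `μ'` (with at most `k + 1` rows) arises from `μ` (with at most `k`
rows) by adding a possibly empty ribbon occupying the rows `p, …, k`: above row `p` nothing
changes, and each row below `p` is the preceding row of `μ` plus one box. -/
structure Step (k p : ℕ) (μ μ' : ℕ → ℕ) : Prop where
  le : p ≤ k
  lo : ∀ i, i < p → μ' i = μ i
  hi : ∀ i, p ≤ i → i < k → μ' (i + 1) = μ i + 1
  out : ∀ i, k < i → μ' i = 0
  mid : μ p ≤ μ' p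

lemma Step.mono {k p : ℕ} {μ μ' : ℕ → ℕ} (h : Step k p μ μ') (ha : Antitone μ)
    (hz : ∀ i, k ≤ i → μ i = 0) (i : ℕ) : μ i ≤ μ' i := by
  rcases lt_trichotomy i p with hi | hi | hi
  · exact (h.lo i hi).ge
  · subst hi; exact h.mid
  · by_cases hk : i ≤ k
    · obtain ⟨i, rfl⟩ : ∃ m, i = m + 1 := ⟨i - 1, by omega⟩
      have := h.hi i (by omega) (by omega)
      have := ha (Nat.le_succ i)
      simp only [Nat.succ_eq_add_one] at this
      omega
    · rw [hz i (by omega)]; exact Nat.zero_le _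

/-- A walk inside `R` from a row below row `i` to a row weakly above it crosses from row `i + 1`
to row `i` inside some column. -/
lemma exists_crossing {R : Finset (ℕ × ℕ)} {a b : ℕ × ℕ} (i : ℕ)
    (h : Relation.ReflTransGen (fun x y => x ∈ R ∧ y ∈ R ∧ Adjacent x y) a b)
    (ha : i < a.1) (hb : b.1 ≤ i) : ∃ j, (i + 1, j) ∈ R ∧ (i, j) ∈ R := by
  induction h with
  | refl => omega
  | @tail b c _ hbc ih =>
    by_cases hb' : b.1 ≤ i
    · exact ih hb'
    · obtain ⟨h1, h2, h3⟩ := hbc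
      obtain ⟨b1, b2⟩ := b
      obtain ⟨c1, c2⟩ := c
      simp only [Adjacent] at *
      have e1 : b1 = i + 1 := by omega
      have e2 : c1 = i := by omega
      have e3 : b2 = c2 := by omega
      subst e1 e2 e3
      exact ⟨b2, h1, h2⟩

/-- A ribbon starting at `(k, 0)` acts on row lengths as a `Step`: connectedness forces
`μ' (i + 1) > μ i` in its rows, and the absence of `2 × 2` blocks forces `μ' (i + 1) ≤ μ i + 1`. -/
lemma exists_step_of_ribbon {k : ℕ} {μ μ' : ℕ → ℕ} {R : Finset (ℕ × ℕ)} (ha : Antitone μ)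
    (ha' : Antitone μ') (hz : ∀ i, k ≤ i → μ i = 0) (hle : ∀ i, μ i ≤ μ' i)
    (hR : ∀ i j, (i, j) ∈ R ↔ μ i ≤ j ∧ j < μ' i)
    (hrib : R = ∅ ∨ IsRibbonSet R) (hst : R.Nonempty → StartsAt R (k, 0)) :
    ∃ p, Step k p μ μ' := by
  rcases hrib with h | h
  · have heq : ∀ i, μ' i = μ i := by
      intro i
      by_contra hne
      have : (i, μ i) ∈ R := (hR _ _).2 ⟨le_rfl, lt_of_le_of_ne (hle i) (Ne.symm hne)⟩
      simp [h] at this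
    exact ⟨k, le_rfl, fun i _ => heq i, fun i h1 h2 => by omega,
      fun i hi => by rw [heq, hz i hi.le], (heq k).ge⟩
  · obtain ⟨hne, hconn, hblock⟩ := h
    obtain ⟨hk0, hcont⟩ := hst hne
    have hex : ∃ i, μ i < μ' i := ⟨k, by have := (hR _ _).1 hk0; omega⟩
    classical
    have hp := Nat.find_spec hex
    have hmin := fun i => Nat.find_min (H := hex) (m := i)
    set p := Nat.find hex
    have hpk : p ≤ k := Nat.find_min' hex (by have := (hR _ _).1 hk0; omega)
    refine ⟨p, hpk, fun i hi => ?_, fun i h1 h2 => ?_, fun i hi => ?_, hle p⟩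
    · have := hmin i hi; have := hle i; omega
    · have hpR : (p, μ p) ∈ R := (hR _ _).2 ⟨le_rfl, hp⟩
      obtain ⟨j, hj1, hj2⟩ := exists_crossing i (hconn _ hk0 _ hpR) h2 h1
      have e1 := (hR _ _).1 hj1
      have e2 := (hR _ _).1 hj2
      by_contra hcon
      have m1 : μ (i + 1) ≤ μ i := ha (Nat.le_succ i)
      have m2 : μ' (i + 1) ≤ μ' i := ha' (Nat.le_succ i)
      refine hblock i (μ i) ⟨?_, ?_, ?_, ?_⟩ <;> rw [hR] <;> omega
    · by_contra hcon
      have hi0 : (i, 0) ∈ R := (hR _ _).2 ⟨by rw [hz i hi.le], by omega⟩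
      have := hcont _ hi0
      simp only at this
      omega

lemma sum_step (p : ℕ) (f f' : ℕ → ℕ) (lo : ∀ i, i < p → f' i = f i) (k : ℕ) (hk : p ≤ k)
    (hi : ∀ i, p ≤ i → i < k → f' (i + 1) = f i + 1) :
    ∑ i ∈ Finset.range (k + 1), f' i = ∑ i ∈ Finset.range k, f i + f' p + (k - p) := by
  induction k, hk using Nat.le_induction with
  | base =>
    rw [Finset.sum_range_succ, Finset.sum_congr rfl fun i h => lo i (Finset.mem_range.1 h)]
    simp
  | succ k hk ih =>
    rw [Finset.sum_range_succ, ih fun i h1 h2 => hi i h1 (by omega), hi k hk (by omega),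
      Finset.sum_range_succ _ k]
    omega

/-- The size of the added ribbon is the difference between the inserted beta-number `μ' p - p` and
the beta-number `-k` of the empty row `k` of `μ`. -/
lemma Step.card {k p : ℕ} {μ μ' : ℕ → ℕ} {R : Finset (ℕ × ℕ)} (h : Step k p μ μ')
    (ha : Antitone μ) (hz : ∀ i, k ≤ i → μ i = 0)
    (hR : ∀ i j, (i, j) ∈ R ↔ μ i ≤ j ∧ j < μ' i) :
    (R.card : ℤ) - k = μ' p - p := by
  have hle := h.mono ha hz
  have hRe : R = ((Finset.range (k + 1)).sigma fun i => Finset.Ico (μ i) (μ' i)).map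
      (Equiv.sigmaEquivProd ℕ ℕ).toEmbedding := by
    ext ⟨i, j⟩
    simp only [Finset.mem_map_equiv, Finset.mem_sigma, Finset.mem_range, Finset.mem_Ico, hR,
      Equiv.sigmaEquivProd_symm_apply]
    refine ⟨fun hij => ⟨?_, hij⟩, fun hij => hij.2⟩
    by_contra hcon
    have := h.out i (by omega)
    omega
  have hc : R.card = ∑ i ∈ Finset.range (k + 1), (μ' i - μ i) := by
    rw [hRe, Finset.card_map, Finset.card_sigma]
    simp
  have hadd : R.card + ∑ i ∈ Finset.range (k + 1), μ i = ∑ i ∈ Finset.range (k + 1), μ' i := by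
    rw [hc, ← Finset.sum_add_distrib]
    exact Finset.sum_congr rfl fun i _ => Nat.sub_add_cancel (hle i)
  have hs := sum_step p μ μ' h.lo k h.le h.hi
  rw [Finset.sum_range_succ, hz k le_rfl] at hadd
  have := h.le
  omega

/-- A step inserts one new beta-number, `μ' p - p`, into the set of beta-numbers. -/
lemma Step.betas {k p : ℕ} {μ μ' : ℕ → ℕ} (h : Step k p μ μ') (z : ℤ) :
    (∃ i, i < k + 1 ∧ (μ' i : ℤ) - i = z) ↔
      (∃ i, i < k ∧ (μ i : ℤ) - i = z) ∨ (μ' p : ℤ) - p = z := by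
  have hpk := h.le
  constructor
  · rintro ⟨i, hi, rfl⟩
    rcases lt_trichotomy i p with h1 | h1 | h1
    · exact Or.inl ⟨i, by omega, by rw [h.lo i h1]⟩
    · subst h1; exact Or.inr rfl
    · obtain ⟨i, rfl⟩ : ∃ m, i = m + 1 := ⟨i - 1, by omega⟩
      exact Or.inl ⟨i, by omega, by rw [h.hi i (by omega) (by omega)]; push_cast; ring⟩
  · rintro (⟨i, hi, rfl⟩ | rfl)
    · by_cases h1 : i < p
      · exact ⟨i, by omega, by rw [h.lo i h1]⟩
      · exact ⟨i + 1, by omega, by rw [h.hi i (by omega) hi]; push_cast; ring⟩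
    · exact ⟨p, by omega, rfl⟩

/-- A partition with at most `k` rows is determined by its set of beta-numbers. -/
lemma eq_of_betas {k : ℕ} {μ ν : ℕ → ℕ} (ha : Antitone μ) (hb : Antitone ν)
    (hza : ∀ i, k ≤ i → μ i = 0) (hzb : ∀ i, k ≤ i → ν i = 0)
    (h : ∀ z : ℤ, (∃ i, i < k ∧ (μ i : ℤ) - i = z) ↔ ∃ i, i < k ∧ (ν i : ℤ) - i = z) :
    μ = ν := by
  have key : ∀ μ : ℕ → ℕ, Antitone μ → StrictMono fun i : Fin k => ((i : ℕ) : ℤ) - μ i := by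
    intro μ ha i j hij
    have h1 := ha (show (i : ℕ) ≤ j from hij.le)
    have h2 : (i : ℕ) < j := hij
    simp only
    omega
  have hr := (StrictMono.range_inj (key μ ha) (key ν hb)).1 (by
    ext z
    simp only [Set.mem_range]
    constructor
    · rintro ⟨i, rfl⟩
      obtain ⟨j, hj, e⟩ := (h (μ i - (i : ℕ))).1 ⟨i, i.2, rfl⟩
      exact ⟨⟨j, hj⟩, by simp only; omega⟩
    · rintro ⟨i, rfl⟩
      obtain ⟨j, hj, e⟩ := (h (ν i - (i : ℕ))).2 ⟨i, i.2, rfl⟩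
      exact ⟨⟨j, hj⟩, by simp only; omega⟩)
  funext i
  by_cases hi : i < k
  · have := congrFun hr ⟨i, hi⟩
    simp only at this
    omega
  · rw [hza i (by omega), hzb i (by omega)]

lemma betas_inj {μ : ℕ → ℕ} (ha : Antitone μ) {i j : ℕ} (h : (μ i : ℤ) - i = μ j - j) :
    i = j := by
  rcases lt_trichotomy i j with h1 | h1 | h1
  · have := ha h1.le; omega
  · exact h1
  · have := ha h1.le; omega

/-- The converse of `exists_step_of_ribbon`: the difference of the two diagrams of a step is empty
or a ribbon starting at `(k, 0)`. -/
lemma Step.ribbon {k p : ℕ} {μ μ' : ℕ → ℕ} {R : Finset (ℕ × ℕ)} (h : Step k p μ μ')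
    (ha : Antitone μ) (hz : ∀ i, k ≤ i → μ i = 0)
    (hR : ∀ i j, (i, j) ∈ R ↔ μ i ≤ j ∧ j < μ' i) :
    (R = ∅ ∨ IsRibbonSet R) ∧ (R.Nonempty → StartsAt R (k, 0)) := by
  have hpk := h.le
  have hrow : ∀ i j, (i, j) ∈ R → p ≤ i ∧ i ≤ k := by
    intro i j hij
    rw [hR] at hij
    constructor
    · by_contra hc
      have := h.lo i (by omega)
      omega
    · by_contra hc
      have := h.out i (by omega)
      omega
  have hk0 : R.Nonempty → (k, 0) ∈ R := by
    rintro ⟨⟨i, j⟩, hij⟩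
    rw [hR, hz k le_rfl]
    refine ⟨le_rfl, ?_⟩
    rcases hpk.eq_or_lt with rfl | hlt
    · have h1 := hrow i j hij
      rw [hR] at hij
      have : i = p := by omega
      subst this
      omega
    · have := h.hi (k - 1) (by omega) (by omega)
      rw [show k - 1 + 1 = k by omega] at this
      omega
  refine ⟨?_, fun hne => ⟨hk0 hne, ?_⟩⟩
  · rcases R.eq_empty_or_nonempty with he | hne
    · exact Or.inl he
    refine Or.inr ⟨hne, ?_, ?_⟩
    · let rel : ℕ × ℕ → ℕ × ℕ → Prop := fun x y => x ∈ R ∧ y ∈ R ∧ Adjacent x y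
      have hsymm : Std.Symm rel := by
        refine ⟨?_⟩
        rintro x y ⟨h1, h2, h3⟩
        refine ⟨h2, h1, ?_⟩
        simp only [Adjacent] at *
        omega
      -- Every box is connected to the leftmost box of the ribbon in its row.
      have hleft : ∀ i d, (i, μ i + d) ∈ R →
          Relation.ReflTransGen rel (i, μ i + d) (i, μ i) := by
        intro i d
        induction d with
        | zero => intro _; exact Relation.ReflTransGen.refl
        | succ d ih =>
          intro hd
          have hd' : (i, μ i + d) ∈ R := by rw [hR] at *; omega
          refine Relation.ReflTransGen.head ⟨hd, hd', ?_⟩ (ih hd')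
          exact Or.inl ⟨rfl, Or.inr rfl⟩
      -- The leftmost box of row `i` lies directly above a box of row `i + 1`.
      have hall : ∀ n i, i + n = k → (i, μ i) ∈ R →
          Relation.ReflTransGen rel (i, μ i) (k, 0) := by
        intro n
        induction n with
        | zero =>
          intro i hi _
          have : i = k := by omega
          subst this
          rw [hz i le_rfl]
        | succ n ih =>
          intro i hi hm
          have h1 := (hrow _ _ hm).1
          have h2 := h.hi i h1 (by omega)
          have h3 : μ (i + 1) ≤ μ i := ha (Nat.le_succ i)
          have hm1 : (i + 1, μ i) ∈ R := by rw [hR]; omega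
          have hm2 : (i + 1, μ (i + 1)) ∈ R := by rw [hR]; omega
          refine Relation.ReflTransGen.head (b := (i + 1, μ i))
            ⟨hm, hm1, Or.inr ⟨rfl, Or.inl rfl⟩⟩ ?_
          have h4 := hleft (i + 1) (μ i - μ (i + 1))
          rw [show μ (i + 1) + (μ i - μ (i + 1)) = μ i by omega] at h4
          exact (h4 hm1).trans (ih (i + 1) (by omega) hm2)
      have hto : ∀ x ∈ R, Relation.ReflTransGen rel x (k, 0) := by
        rintro ⟨i, j⟩ hx
        have h1 := hrow _ _ hx
        have h2 := (hR _ _).1 hx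
        have h3 : (i, μ i) ∈ R := by rw [hR]; omega
        have h4 := hleft i (j - μ i)
        rw [show μ i + (j - μ i) = j by omega] at h4
        exact (h4 hx).trans (hall (k - i) i (by omega) h3)
      intro x hx y hy
      exact (hto x hx).trans (Relation.ReflTransGen.stdSymm.symm _ _ (hto y hy))
    · rintro i j ⟨h1, h2, -, h4⟩
      have e1 := hrow _ _ h1
      have e2 := hrow _ _ h2
      have e3 := h.hi i e1.1 (by omega)
      rw [hR] at h1 h4
      omega
  · rintro ⟨i, j⟩ hij
    have := hrow _ _ hij
    simp only
    omega

/-! ### Chains of partitions -/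

/-- The chain of partitions underlying a sequence of ribbons: `M k` gives the row lengths of the
union of the first `k` members of `Θ`, so that `Θ k` is the skew diagram `M (k + 1) / M k`. -/
structure IsChainOf (r : ℕ) (Θ : Fin r → Finset (ℕ × ℕ)) (M : ℕ → ℕ → ℕ) : Prop where
  anti : ∀ k, k ≤ r → Antitone (M k)
  zero : ∀ k, k ≤ r → ∀ i, k ≤ i → M k i = 0
  mem : ∀ (k : Fin r) i j, (i, j) ∈ Θ k ↔ M k i ≤ j ∧ j < M (k + 1) i
  step : ∀ k, k < r → ∃ p, Step k p (M k) (M (k + 1))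

lemma mem_diagFinset (r : ℕ) (lam : ℕ → ℕ) (i j : ℕ) :
    (i, j) ∈ diagFinset r lam ↔ i < r ∧ j < lam i := by
  simp [diagFinset]

/-- A Young set is described by an antitone function of row lengths. -/
lemma exists_rowLen {S : Finset (ℕ × ℕ)} (hS : IsYoungSet S) :
    ∃ μ : ℕ → ℕ, Antitone μ ∧ ∀ i j, (i, j) ∈ S ↔ j < μ i := by
  have h1 : ∀ i j d, (i, j + d) ∈ S → (i, j) ∈ S := by
    intro i j d
    induction d with
    | zero => exact id
    | succ d ih => exact fun h => ih (hS.1 _ _ h)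
  have h2 : ∀ j i d, (i + d, j) ∈ S → (i, j) ∈ S := by
    intro j i d
    induction d with
    | zero => exact id
    | succ d ih => exact fun h => ih (hS.2 _ _ h)
  let Y : YoungDiagram := ⟨S, by
    rintro ⟨a, b⟩ ⟨c, d⟩ hle hab
    obtain ⟨e1, e2⟩ := hle
    simp only at e1 e2
    obtain ⟨x, rfl⟩ := Nat.exists_eq_add_of_le e1
    obtain ⟨y, rfl⟩ := Nat.exists_eq_add_of_le e2
    exact h1 _ _ y (h2 _ _ x hab)⟩
  exact ⟨Y.rowLen, fun i j hij => Y.rowLen_anti i j hij, fun i j => Y.mem_iff_lt_rowLen⟩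

/-- The partial unions of an `H`-rim decomposition form a chain of partitions ending at `lam`. -/
lemma exists_chain {r : ℕ} {lam : ℕ → ℕ} (hlam : IsPartitionWith r lam)
    {Θ : Fin r → Finset (ℕ × ℕ)} (hΘ : IsHRim r lam Θ) :
    ∃ M, IsChainOf r Θ M ∧ M r = lam := by
  obtain ⟨hrib, hdisj, hY, hU, hst⟩ := hΘ
  classical
  let U : ℕ → Finset (ℕ × ℕ) := fun k =>
    (Finset.univ.filter fun j : Fin r => (j : ℕ) < k).biUnion Θ
  have hUmem : ∀ k x, x ∈ U k ↔ ∃ l : Fin r, (l : ℕ) < k ∧ x ∈ Θ l := by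
    intro k x; simp [U]
  have hUY : ∀ k, ∃ μ : ℕ → ℕ, k ≤ r → Antitone μ ∧ ∀ i j, (i, j) ∈ U k ↔ j < μ i := by
    intro k
    by_cases hk : k ≤ r
    · have : IsYoungSet (U k) := by
        rcases Nat.eq_zero_or_pos k with rfl | hpos
        · simp [U, IsYoungSet]
        · convert hY ⟨k - 1, by omega⟩ using 1
          ext x
          simp only [hUmem, Finset.mem_biUnion, Finset.mem_Iic, Fin.le_def]
          refine exists_congr fun l => and_congr_left fun _ => ?_
          omega
      obtain ⟨μ, hμ⟩ := exists_rowLen this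
      exact ⟨μ, fun _ => hμ⟩
    · exact ⟨0, fun h => absurd h hk⟩
  choose M hM using hUY
  have hanti : ∀ k, k ≤ r → Antitone (M k) := fun k hk => (hM k hk).1
  have hmem : ∀ k, k ≤ r → ∀ i j, (i, j) ∈ U k ↔ j < M k i := fun k hk => (hM k hk).2
  -- Boxes of `Θ l` have content at least `-l`, so the first `k` members avoid column `0` in
  -- the rows from `k` on.
  have hzero : ∀ k, k ≤ r → ∀ i, k ≤ i → M k i = 0 := by
    intro k hk i hi
    by_contra hne
    obtain ⟨l, hl, hx⟩ := (hUmem _ _).1 ((hmem k hk i 0).2 (Nat.pos_of_ne_zero hne))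
    have := (hst l ⟨_, hx⟩).2 _ hx
    simp only at this
    omega
  have hΘmem : ∀ (k : Fin r) i j, (i, j) ∈ Θ k ↔ M k i ≤ j ∧ j < M (k + 1) i := by
    intro k i j
    rw [← hmem (k + 1) k.2, ← not_lt, ← hmem k k.2.le, hUmem, hUmem]
    constructor
    · intro hx
      refine ⟨?_, k, by omega, hx⟩
      rintro ⟨l, hl, hx'⟩
      refine Finset.disjoint_left.1 (hdisj k l ?_) hx hx'
      rintro rfl
      omega
    · rintro ⟨h1, l, hl, hx⟩
      by_cases hlk : (l : ℕ) < k
      · exact absurd ⟨l, hlk, hx⟩ h1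
      · have : l = k := Fin.ext (by omega)
        exact this ▸ hx
  refine ⟨M, ⟨hanti, hzero, hΘmem, ?_⟩, ?_⟩
  · intro k hk
    refine exists_step_of_ribbon (hanti k hk.le) (hanti _ hk) (hzero k hk.le) ?_
      (hΘmem ⟨k, hk⟩) (hrib ⟨k, hk⟩) (hst ⟨k, hk⟩)
    intro i
    by_contra hc
    have h1 := (hmem k hk.le i (M (k + 1) i)).2 (by omega)
    obtain ⟨l, hl, hx⟩ := (hUmem _ _).1 h1
    have h2 := (hmem (k + 1) hk i (M (k + 1) i)).1 ((hUmem _ _).2 ⟨l, by omega, hx⟩)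
    omega
  · have hUr : U r = diagFinset r lam := by
      rw [← hU]
      ext x
      simp [hUmem]
    funext i
    refine eq_of_forall_lt_iff fun j => ?_
    rw [← hmem r le_rfl, hUr, mem_diagFinset, and_iff_right_iff_imp]
    intro hj
    exact (hlam.2 i).1 (by omega)

/-- The beta-numbers of the `k`-th partition of a chain are the numbers `|Θ j| - j`, `j < k`. -/
lemma IsChainOf.betas {r : ℕ} {Θ : Fin r → Finset (ℕ × ℕ)} {M : ℕ → ℕ → ℕ}
    (h : IsChainOf r Θ M) (k : ℕ) (hk : k ≤ r) (z : ℤ) :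
    (∃ i, i < k ∧ (M k i : ℤ) - i = z) ↔
      ∃ j : Fin r, (j : ℕ) < k ∧ ((Θ j).card : ℤ) - (j : ℕ) = z := by
  induction k with
  | zero => simp
  | succ k ih =>
    obtain ⟨p, hp⟩ := h.step k hk
    rw [hp.betas, ih (by omega)]
    have hc := hp.card (h.anti k (by omega)) (h.zero k (by omega)) (h.mem ⟨k, hk⟩)
    rw [← hc]
    constructor
    · rintro (⟨j, hj, e⟩ | e)
      · exact ⟨j, by omega, e⟩
      · exact ⟨⟨k, hk⟩, by simp, e⟩
    · rintro ⟨j, hj, e⟩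
      by_cases hjk : (j : ℕ) < k
      · exact Or.inl ⟨j, hjk, e⟩
      · have : j = ⟨k, hk⟩ := Fin.ext (by simp only; omega)
        subst this
        exact Or.inr e

lemma exists_perm {r : ℕ} {lam : ℕ → ℕ} (hlam : IsPartitionWith r lam)
    {Θ : Fin r → Finset (ℕ × ℕ)} (hΘ : IsHRim r lam Θ) :
    ∃ σ : Equiv.Perm (Fin r), ∀ i : Fin r,
      (lam (σ i : ℕ) : ℤ) - ((σ i : ℕ) : ℤ) + ((i : ℕ) : ℤ) = ((Θ i).card : ℤ) := by
  obtain ⟨M, hM, rfl⟩ := exists_chain hlam hΘ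
  have : ∀ i : Fin r, ∃ j : Fin r, ((Θ j).card : ℤ) - (j : ℕ) = M r i - (i : ℕ) := by
    intro i
    obtain ⟨j, -, e⟩ := (hM.betas r le_rfl _).1 ⟨i, i.2, rfl⟩
    exact ⟨j, e⟩
  choose ρ hρ using this
  have hinj : Function.Injective ρ := by
    intro a b hab
    have h1 := hρ a
    rw [hab, hρ b] at h1
    exact Fin.ext (betas_inj hlam.1 h1.symm)
  refine ⟨(Equiv.ofBijective ρ (Finite.injective_iff_bijective.1 hinj)).symm, fun i => ?_⟩
  obtain ⟨a, rfl⟩ := (Equiv.ofBijective ρ (Finite.injective_iff_bijective.1 hinj)).surjective i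
  rw [Equiv.symm_apply_apply]
  have := hρ a
  simp only [Equiv.ofBijective_apply]
  omega

/-- An `H`-rim decomposition is determined by the sizes of its members. -/
lemma hRim_ext {r : ℕ} {lam : ℕ → ℕ} (hlam : IsPartitionWith r lam)
    {Θ Θ' : Fin r → Finset (ℕ × ℕ)} (hΘ : IsHRim r lam Θ) (hΘ' : IsHRim r lam Θ')
    (hc : ∀ i, (Θ i).card = (Θ' i).card) : Θ = Θ' := by
  obtain ⟨M, hM, -⟩ := exists_chain hlam hΘ
  obtain ⟨M', hM', -⟩ := exists_chain hlam hΘ'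
  have heq : ∀ k, k ≤ r → M k = M' k := by
    intro k hk
    refine eq_of_betas (hM.anti k hk) (hM'.anti k hk) (hM.zero k hk) (hM'.zero k hk) fun z => ?_
    rw [hM.betas k hk, hM'.betas k hk]
    simp only [hc]
  funext k
  ext ⟨i, j⟩
  rw [hM.mem, hM'.mem, heq k k.2.le, heq (k + 1) k.2]

/-! ### Construction of a decomposition from its beta-numbers -/

/-- Insertion of `y` into the decreasing sequence of beta-numbers `b i = μ i - i` of a partition `μ`
with at most `k` rows, giving a partition with at most `k + 1` rows when `y ≥ -k` is not among
the `b i` with `i < k`. The new `i`-th beta-number is `max (b i) (min (b (i - 1)) y)`, where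
`b (-1)` is read as infinite. -/
def insertBeta (k : ℕ) (y : ℤ) (μ : ℕ → ℕ) (i : ℕ) : ℕ :=
  if k < i then 0
  else if i = 0 then max (μ 0) y.toNat
  else max (μ i) (min (μ (i - 1) + 1) (y + i).toNat)

lemma insertBeta_anti {k : ℕ} {y : ℤ} {μ : ℕ → ℕ} (ha : Antitone μ)
    (hne : ∀ i, i < k → (μ i : ℤ) - i ≠ y) : Antitone (insertBeta k y μ) := by
  refine antitone_nat_of_succ_le fun i => ?_
  have h0 := hne i
  have h1 : μ (i + 1) ≤ μ i := ha (Nat.le_succ i)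
  have h2 : μ i ≤ μ (i - 1) := ha (Nat.sub_le i 1)
  unfold insertBeta
  simp only [Nat.add_sub_cancel, Nat.add_eq_zero_iff, one_ne_zero, and_false, if_false]
  push_cast
  rcases Nat.eq_zero_or_pos i with rfl | hi
  · simp only [Nat.zero_add, if_true, Nat.cast_zero] at *
    split_ifs <;> omega
  · rw [if_neg hi.ne']
    split_ifs <;> omega

/-- Here `p` is the number of beta-numbers of `μ` larger than `y`. -/
lemma exists_insertBeta_step {k : ℕ} {y : ℤ} {μ : ℕ → ℕ} (ha : Antitone μ)
    (hz : ∀ i, k ≤ i → μ i = 0) (hy : -(k : ℤ) ≤ y) (hne : ∀ i, i < k → (μ i : ℤ) - i ≠ y) :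
    ∃ p, Step k p μ (insertBeta k y μ) ∧ (insertBeta k y μ p : ℤ) - p = y := by
  classical
  have hex : ∃ p, p = k ∨ (μ p : ℤ) - p < y := ⟨k, Or.inl rfl⟩
  have hp := Nat.find_spec hex
  have hmin : ∀ i, i < Nat.find hex → ¬ (i = k ∨ (μ i : ℤ) - i < y) :=
    fun i hi => Nat.find_min hex hi
  have hpk : Nat.find hex ≤ k := Nat.find_min' hex (Or.inl rfl)
  generalize Nat.find hex = p at hp hmin hpk
  have hgt : ∀ i, i < p → y < (μ i : ℤ) - i := by
    intro i hi
    have h1 := hmin i hi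
    have h2 := hne i (by omega)
    omega
  have hlt : ∀ i, p ≤ i → i < k → (μ i : ℤ) - i < y := by
    intro i h1 h2
    have := ha h1
    omega
  have hval : (insertBeta k y μ p : ℤ) - p = y := by
    have hzk := hz k le_rfl
    have hp' : (μ p : ℤ) - p ≤ y := by
      rcases hp with rfl | hp <;> omega
    unfold insertBeta
    rw [if_neg (by omega)]
    split_ifs with h0
    · subst h0; omega
    · have := hgt (p - 1) (by omega)
      omega
  refine ⟨p, ⟨hpk, ?_, ?_, ?_, ?_⟩, hval⟩
  · intro i hi
    have h1 := hgt i hi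
    unfold insertBeta
    rw [if_neg (by omega)]
    split_ifs with h0
    · subst h0; omega
    · omega
  · intro i h1 h2
    have h3 := hlt i h1 h2
    have h4 : μ (i + 1) ≤ μ i := ha (Nat.le_succ i)
    unfold insertBeta
    rw [if_neg (by omega), if_neg (by omega), Nat.add_sub_cancel]
    omega
  · intro i hi
    simp [insertBeta, hi]
  · have hzk := hz k le_rfl
    rcases hp with rfl | hp <;> omega

/-- The partitions obtained from the empty one by inserting `y 0`, `y 1`, … successively. -/
def betaChain (y : ℕ → ℤ) : ℕ → ℕ → ℕ
  | 0 => fun _ => 0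
  | k + 1 => insertBeta k (y k) (betaChain y k)

/-- Inserting the numbers `lam (σ k) - σ k` one after another gives a chain of partitions ending at
`lam`; its successive skew diagrams form an `H`-rim decomposition with the prescribed sizes. -/
lemma exists_hRim {r : ℕ} {lam : ℕ → ℕ} (hlam : IsPartitionWith r lam)
    (σ : Equiv.Perm (Fin r))
    (hσ : ∀ i : Fin r, 0 ≤ (lam (σ i : ℕ) : ℤ) - ((σ i : ℕ) : ℤ) + ((i : ℕ) : ℤ)) :
    ∃ Θ, IsHRim r lam Θ ∧ ∀ i : Fin r,
      (lam (σ i : ℕ) : ℤ) - ((σ i : ℕ) : ℤ) + ((i : ℕ) : ℤ) = ((Θ i).card : ℤ) := by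
  let y : ℕ → ℤ := fun k =>
    if h : k < r then (lam (σ ⟨k, h⟩ : ℕ) : ℤ) - ((σ ⟨k, h⟩ : ℕ) : ℤ) else 0
  have hyv : ∀ (k : ℕ) (h : k < r), y k = (lam (σ ⟨k, h⟩ : ℕ) : ℤ) - ((σ ⟨k, h⟩ : ℕ) : ℤ) :=
    fun k h => dif_pos h
  have hyinj : ∀ k l, k < r → l < r → y k = y l → k = l := by
    intro k l hk hl e
    rw [hyv k hk, hyv l hl] at e
    have := σ.injective (Fin.ext (betas_inj hlam.1 e))
    simpa using this
  let M := betaChain y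
  have hM : ∀ k, k ≤ r → Antitone (M k) ∧ (∀ i, k ≤ i → M k i = 0) ∧
      ∀ z : ℤ, (∃ i, i < k ∧ (M k i : ℤ) - i = z) ↔ ∃ j, j < k ∧ y j = z := by
    intro k
    induction k with
    | zero => exact fun _ => ⟨fun _ _ _ => le_rfl, fun _ _ => rfl, by simp⟩
    | succ k ih =>
      intro hk
      obtain ⟨h1, h2, h3⟩ := ih (by omega)
      have hy : -(k : ℤ) ≤ y k := by
        have := hσ ⟨k, hk⟩
        rw [hyv k hk]
        simp only at this
        omega
      have hne : ∀ i, i < k → (M k i : ℤ) - i ≠ y k := by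
        intro i hi e
        obtain ⟨j, hj, e'⟩ := (h3 _).1 ⟨i, hi, e⟩
        have := hyinj j k (by omega) hk e'
        omega
      obtain ⟨p, hp, hv⟩ := exists_insertBeta_step h1 h2 hy hne
      refine ⟨insertBeta_anti h1 hne, fun i hi => hp.out i hi, fun z => ?_⟩
      refine (hp.betas z).trans ?_
      rw [h3, hv]
      constructor
      · rintro (⟨j, hj, e⟩ | e)
        · exact ⟨j, by omega, e⟩
        · exact ⟨k, by omega, e⟩
      · rintro ⟨j, hj, e⟩
        by_cases hjk : j < k
        · exact Or.inl ⟨j, hjk, e⟩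
        · have : j = k := by omega
          exact Or.inr (this ▸ e)
  have hstep : ∀ k, k < r → ∃ p, Step k p (M k) (M (k + 1)) ∧ (M (k + 1) p : ℤ) - p = y k := by
    intro k hk
    obtain ⟨h1, h2, h3⟩ := hM k hk.le
    refine exists_insertBeta_step h1 h2 ?_ ?_
    · have := hσ ⟨k, hk⟩
      rw [hyv k hk]
      simp only at this
      omega
    · intro i hi e
      obtain ⟨j, hj, e'⟩ := (h3 _).1 ⟨i, hi, e⟩
      have := hyinj j k (by omega) hk e'
      omega
  have hlamz : ∀ i, r ≤ i → lam i = 0 := by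
    intro i hi
    by_contra hc
    have := (hlam.2 i).1 (Nat.pos_of_ne_zero hc)
    omega
  have hfin : M r = lam := by
    obtain ⟨h1, h2, h3⟩ := hM r le_rfl
    refine eq_of_betas h1 hlam.1 h2 hlamz fun z => (h3 z).trans ?_
    constructor
    · rintro ⟨j, hj, rfl⟩
      exact ⟨σ ⟨j, hj⟩, (σ ⟨j, hj⟩).2, (hyv j hj).symm⟩
    · rintro ⟨i, hi, rfl⟩
      refine ⟨σ.symm ⟨i, hi⟩, (σ.symm ⟨i, hi⟩).2, ?_⟩
      rw [hyv _ (σ.symm ⟨i, hi⟩).2]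
      simp
  have hmono : ∀ k, k < r → ∀ i, M k i ≤ M (k + 1) i := by
    intro k hk i
    obtain ⟨p, hp, -⟩ := hstep k hk
    exact hp.mono (hM k hk.le).1 (hM k hk.le).2.1 i
  have hmono' : ∀ k l, k ≤ l → l ≤ r → ∀ i, M k i ≤ M l i := by
    intro k l hkl
    induction l, hkl using Nat.le_induction with
    | base => exact fun _ _ => le_rfl
    | succ l hl ih => exact fun hr i => (ih (by omega) i).trans (hmono l hr i)
  let Θ : Fin r → Finset (ℕ × ℕ) := fun k =>
    diagFinset (k + 1) (M (k + 1)) \ diagFinset k (M k)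
  have hΘ : ∀ (k : Fin r) i j, (i, j) ∈ Θ k ↔ M k i ≤ j ∧ j < M (k + 1) i := by
    intro k i j
    simp only [Θ, Finset.mem_sdiff, mem_diagFinset]
    have h1 := (hM k k.2.le).2.1 i
    have h2 := (hM (k + 1) k.2).2.1 i
    constructor
    · rintro ⟨⟨e1, e2⟩, e3⟩
      refine ⟨?_, e2⟩
      by_contra hc
      refine e3 ⟨?_, by omega⟩
      by_contra hc'
      have := h1 (by omega)
      omega
    · rintro ⟨e1, e2⟩
      refine ⟨⟨?_, e2⟩, fun e => by omega⟩
      by_contra hc'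
      have := h2 (by omega)
      omega
  have hunion : ∀ k, k ≤ r → ∀ i j, (∃ l : Fin r, (l : ℕ) < k ∧ (i, j) ∈ Θ l) ↔ j < M k i := by
    intro k hk i j
    constructor
    · rintro ⟨l, hl, hx⟩
      have h1 := (hΘ l i j).1 hx
      exact h1.2.trans_le (hmono' (l + 1) k hl hk i)
    · induction k with
      | zero => intro h; exact absurd h (Nat.not_lt_zero _)
      | succ k ih =>
        intro h
        by_cases hj : j < M k i
        · obtain ⟨l, hl, hx⟩ := ih (by omega) hj
          exact ⟨l, by omega, hx⟩
        · exact ⟨⟨k, hk⟩, by simp, (hΘ _ i j).2 ⟨by simp only; omega, h⟩⟩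
  have hrib : ∀ k : Fin r, (Θ k = ∅ ∨ IsRibbonSet (Θ k)) ∧
      ((Θ k).Nonempty → StartsAt (Θ k) ((k : ℕ), 0)) := by
    intro k
    obtain ⟨p, hp, -⟩ := hstep k k.2
    exact hp.ribbon (hM k k.2.le).1 (hM k k.2.le).2.1 (hΘ k)
  refine ⟨Θ, ⟨fun k => (hrib k).1, ?_, ?_, ?_, fun k => (hrib k).2⟩, ?_⟩
  · have key : ∀ k l : Fin r, k < l → Disjoint (Θ k) (Θ l) := by
      intro k l hkl
      rw [Finset.disjoint_left]
      rintro ⟨i, j⟩ h1 h2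
      rw [hΘ] at h1 h2
      have := hmono' (k + 1) l hkl l.2.le i
      omega
    intro k l hkl
    rcases lt_or_gt_of_ne hkl with h | h
    · exact key k l h
    · exact (key l k h).symm
  · intro k
    have hm : ∀ i j, (i, j) ∈ (Finset.Iic k).biUnion Θ ↔ j < M (k + 1) i := by
      intro i j
      rw [← hunion (k + 1) k.2]
      simp only [Finset.mem_biUnion, Finset.mem_Iic, Fin.le_def, Nat.lt_succ_iff]
    refine ⟨fun i j => ?_, fun i j => ?_⟩
    · rw [hm, hm]; omega
    · rw [hm, hm]
      have := (hM (k + 1) k.2).1 (Nat.le_succ i)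
      simp only [Nat.succ_eq_add_one] at this
      omega
  · ext ⟨i, j⟩
    have h1 := hunion r le_rfl i j
    rw [mem_diagFinset, ← hfin]
    simp only [Finset.mem_biUnion, Finset.mem_univ, true_and]
    simp only [Fin.is_lt, true_and] at h1
    rw [h1]
    refine ⟨fun h => ⟨?_, h⟩, fun h => h.2⟩
    by_contra hc
    have := (hM r le_rfl).2.1 i (by omega)
    omega
  · intro k
    obtain ⟨p, hp, hv⟩ := hstep k k.2
    have hc := hp.card (hM k k.2.le).1 (hM k k.2.le).2.1 (hΘ k)
    rw [hv, hyv k k.2] at hc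
    simp only [Fin.eta] at hc
    omega

end SMZ

/-- For every `H`-rim decomposition `Θ` of `λ` there is an `H`-pattern `L` whose `i`-th path
has horizontal distance `|θ_i|`; moreover `τ_H`, sending `Θ` to the type of such an `L`
(equivalently, the unique `σ` with `λ_{σ(i)} - σ(i) + i = |θ_i|` for all `i`), is a
well-defined bijection from `Rim^λ_H` onto `S^λ_H`. -/
theorem hRim_pattern_exists_and_bijective
    (r N : ℕ) (hN : 0 < N) (lam : ℕ → ℕ) (hlam : SMZ.IsPartitionWith r lam) :
    (∀ Θ : {Θ : Fin r → Finset (ℕ × ℕ) // SMZ.IsHRim r lam Θ},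
      ∃ σ : Equiv.Perm (Fin r), ∀ i : Fin r,
        ∃ p ∈ SMZ.PathSet (SMZ.Apt r i) (SMZ.Bpt r N lam (σ i)),
          SMZ.horizSteps p = (Θ.1 i).card) ∧
    ∃ τ : {Θ : Fin r → Finset (ℕ × ℕ) // SMZ.IsHRim r lam Θ} →
        {σ : Equiv.Perm (Fin r) // σ ∈ SMZ.HTypeSet r N lam},
      (∀ Θ (i : Fin r),
        (lam ((τ Θ).1 i : ℕ) : ℤ) - (((τ Θ).1 i : ℕ) : ℤ) + ((i : ℕ) : ℤ)
          = ((Θ.1 i).card : ℤ)) ∧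
      Function.Bijective τ := by
  have hpos : ∀ σ : Equiv.Perm (Fin r), σ ∈ SMZ.HTypeSet r N lam → ∀ i : Fin r,
      0 ≤ (lam (σ i : ℕ) : ℤ) - ((σ i : ℕ) : ℤ) + ((i : ℕ) : ℤ) :=
    fun σ hσ i => SMZ.hpath_nonneg lam i (σ i) (hσ i)
  choose σ hσ using fun Θ : {Θ : Fin r → Finset (ℕ × ℕ) // SMZ.IsHRim r lam Θ} =>
    SMZ.exists_perm hlam Θ.2
  have hpath := fun Θ i => SMZ.exists_hpath hN lam i (σ Θ i) _ (hσ Θ i)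
  refine ⟨fun Θ => ⟨σ Θ, hpath Θ⟩, fun Θ => ⟨σ Θ, fun i => ?_⟩, hσ, ?_, ?_⟩
  · obtain ⟨p, hp, -⟩ := hpath Θ i
    exact ⟨p, hp⟩
  · intro Θ Θ' h
    have he : σ Θ = σ Θ' := congrArg Subtype.val h
    refine Subtype.ext (SMZ.hRim_ext hlam Θ.2 Θ'.2 fun i => ?_)
    have h1 := hσ Θ i
    rw [he, hσ Θ' i] at h1
    exact_mod_cast h1.symm
  · rintro ⟨ρ, hρ⟩
    obtain ⟨Θ, hΘ, hc⟩ := SMZ.exists_hRim hlam ρ (hpos ρ hρ)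
    refine ⟨⟨Θ, hΘ⟩, Subtype.ext (Equiv.ext fun i => Fin.ext (SMZ.betas_inj hlam.1 ?_))⟩
    have h1 := hσ ⟨Θ, hΘ⟩ i
    rw [← hc i] at h1
    exact add_right_cancel h1
end
end

section
/- Let λ=(λ_1,…,λ_r) be a partition, N∈ℕ, and s=(s_{ij})∈T^diag(λ,ℂ) with common diagonal values a_k. Then the truncated Schur multiple zeta value satisfies ζ^N_λ(s) = det[ ζ^{N⋆}(a_{−j+1}, a_{−j+2}, …, a_{−j+(λ_i−i+j)}) ]_{1≤i,j≤r}, where the (i,j) entry is understood to be 1 if λ_i−i+j=0 and 0 if λ_i−i+j<0. (This truncated Jacobi–Trudi identity of H-type holds for arbitrary complex diagonal values, with no convergence hypothesis.) -/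
/-!
The proof is by induction on `N`: the tableau sum and the determinant obey the same branching rule.

Deleting the boxes filled with `N + 1` from a semi-standard tableau of shape `λ` leaves a tableau
with entries at most `N`, whose shape `μ` satisfies `λ_{i+1} ≤ μ_i ≤ λ_i` for all `i` (that is,
`λ / μ` is a horizontal strip), and every tableau of such a shape `μ` with entries at most `N`
arises exactly once. So the tableau sum for `N + 1` and `λ` is the sum over these `μ` of the weights of the strip `λ / μ` times the sum for `N` and `μ`
(`JT.sum_fiber`).

On the determinant side, write `L_i = λ_i - i` and let `H_N(L)` be the row vector with `j`-th
coordinate `ζ^{N⋆}(a_{-j}, …, a_{L-1})`. Splitting off the largest summation variable gives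
`H_{N+1}(L) = H_N(L) + (N+1)^{-a_{L-1}} H_{N+1}(L-1)`, with a coefficient independent of `j`
(`JT.hStar_succ`). Iterating down to `L_{i+1}` writes row `i` as a weighted sum of the rows
`H_N(μ_i - i)`, `λ_{i+1} ≤ μ_i ≤ λ_i`, plus a multiple of row `i + 1`. The latter does not affect
the determinant, and multilinearity in the rows yields the branching rule (`JT.jtDet_succ`).

For `N = 0` both sides are `1` if `λ` is empty and `0` otherwise. Shapes are allowed to have zero
parts among the `r` rows, since `μ` may have fewer rows than `λ`.
-/

open scoped BigOperators

noncomputable section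

namespace SMZ

/-- Truncated multiple zeta value `ζ^N(s)`. -/
def mzvN (N : ℕ) {n : ℕ} (s : Fin n → ℂ) : ℂ :=
  ∑' f : {f : Fin n → ℕ // StrictMono f ∧ (∀ i, 0 < f i) ∧ ∀ i, f i ≤ N},
    ∏ i, (f.1 i : ℂ) ^ (-(s i))

/-- Truncated multiple zeta-star value `ζ^{N⋆}(s)`. -/
def mzvStarN (N : ℕ) {n : ℕ} (s : Fin n → ℂ) : ℂ :=
  ∑' f : {f : Fin n → ℕ // Monotone f ∧ (∀ i, 0 < f i) ∧ ∀ i, f i ≤ N},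
    ∏ i, (f.1 i : ℂ) ^ (-(s i))

/-- `ζ^{N⋆}(a start, a (start+1), …)` with `len` terms; `1` if `len = 0`, `0` if `len < 0`. -/
def mzvStarNSeq (N : ℕ) (a : ℤ → ℂ) (start len : ℤ) : ℂ :=
  if len < 0 then 0 else mzvStarN N fun i : Fin len.toNat => a (start + (i : ℕ))

/-- `ζ^N(a start, a (start-1), …)` with `len` terms; `1` if `len = 0`, `0` if `len < 0`. -/
def mzvNSeqDesc (N : ℕ) (a : ℤ → ℂ) (start len : ℤ) : ℂ :=
  if len < 0 then 0 else mzvN N fun i : Fin len.toNat => a (start - (i : ℕ))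

/-- The truncated Schur multiple zeta value `ζ^N_λ(s)`. -/
def schurZetaN (N r : ℕ) (lam : ℕ → ℕ) (s : ℕ × ℕ → ℂ) : ℂ :=
  ∑' M : {m : ℕ × ℕ → ℕ // IsSSYT lam m ∧ ∀ p, m p ≤ N}, term r lam s M.1

end SMZ
namespace JT

/-- The weight `n ^ (-a k)` of an entry `n` placed in a box of content `k`. -/
def wt (a : ℤ → ℂ) (n : ℕ) (k : ℤ) : ℂ := (n : ℂ) ^ (-(a k))

/-! ### Truncated zeta-star values -/

/-- The finite index set of `ζ^{N⋆}`. -/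
def monoSet (N n : ℕ) : Finset (Fin n → ℕ) :=
  open Classical in (Fintype.piFinset fun _ : Fin n => Finset.Icc 1 N).filter Monotone

lemma mem_monoSet {N n : ℕ} {f : Fin n → ℕ} :
    f ∈ monoSet N n ↔ Monotone f ∧ (∀ i, 0 < f i) ∧ ∀ i, f i ≤ N := by
  simp only [monoSet, Finset.mem_filter, Fintype.mem_piFinset, Finset.mem_Icc]
  constructor
  · rintro ⟨h1, h2⟩
    exact ⟨h2, fun i => (h1 i).1, fun i => (h1 i).2⟩
  · rintro ⟨h1, h2, h3⟩
    exact ⟨fun i => ⟨h2 i, h3 i⟩, h1⟩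

/-- A sum over a subtype that is cut out by a finset is a finite sum. -/
lemma tsum_eq_sum_of_mem {α : Type*} {P : α → Prop} (S : Finset α) (hS : ∀ x, x ∈ S ↔ P x)
    (g : α → ℂ) : ∑' x : {x // P x}, g x.1 = ∑ x ∈ S, g x := by
  have : P = fun x => x ∈ S := funext fun x => propext (hS x).symm
  subst this
  exact Finset.tsum_subtype S g

lemma mzvStarN_eq_sum (N : ℕ) {n : ℕ} (t : Fin n → ℂ) :
    SMZ.mzvStarN N t = ∑ f ∈ monoSet N n, ∏ i, (f i : ℂ) ^ (-(t i)) :=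
  tsum_eq_sum_of_mem (monoSet N n) (fun _ => mem_monoSet) fun f => ∏ i, (f i : ℂ) ^ (-(t i))

/-- Split according to whether the largest (last) entry equals `N + 1`. -/
lemma mzvStarN_succ (N n : ℕ) (t : Fin (n + 1) → ℂ) :
    SMZ.mzvStarN (N + 1) t = SMZ.mzvStarN N t +
      ((N + 1 : ℕ) : ℂ) ^ (-(t (Fin.last n))) *
        SMZ.mzvStarN (N + 1) (fun i : Fin n => t i.castSucc) := by
  classical
  simp only [mzvStarN_eq_sum]
  rw [← Finset.sum_filter_add_sum_filter_not _ (fun f => f (Fin.last n) ≤ N)]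
  congr 1
  · apply Finset.sum_congr _ (fun _ _ => rfl)
    ext f
    simp only [Finset.mem_filter, mem_monoSet]
    constructor
    · rintro ⟨⟨h1, h2, -⟩, h4⟩
      exact ⟨h1, h2, fun i => (h1 (Fin.le_last i)).trans h4⟩
    · rintro ⟨h1, h2, h3⟩
      exact ⟨⟨h1, h2, fun i => (h3 i).trans (Nat.le_succ N)⟩, h3 _⟩
  · rw [Finset.mul_sum]
    refine Finset.sum_bij' (fun f _ => fun i : Fin n => f i.castSucc)
      (fun g _ => (Fin.snoc g (N + 1) : Fin (n + 1) → ℕ)) ?_ ?_ ?_ ?_ ?_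
    · intro f hf
      simp only [Finset.mem_filter, mem_monoSet] at hf ⊢
      obtain ⟨⟨h1, h2, h3⟩, -⟩ := hf
      exact ⟨fun i j hij => h1 (Fin.castSucc_le_castSucc_iff.2 hij), fun i => h2 _, fun i => h3 _⟩
    · intro g hg
      simp only [Finset.mem_filter, mem_monoSet] at hg ⊢
      obtain ⟨h1, h2, h3⟩ := hg
      refine ⟨⟨?_, ?_, ?_⟩, by simp⟩
      · intro i j
        refine Fin.lastCases ?_ (fun j => ?_) j
        · intro _
          refine Fin.lastCases ?_ (fun i => ?_) i
          · simp
          · simpa using h3 i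
        · refine Fin.lastCases ?_ (fun i => ?_) i
          · intro h
            exact absurd h (not_le.2 (Fin.castSucc_lt_last j))
          · intro h
            simpa using h1 (Fin.castSucc_le_castSucc_iff.1 h)
      · intro i
        refine Fin.lastCases ?_ (fun i => ?_) i
        · simp
        · simpa using h2 i
      · intro i
        refine Fin.lastCases ?_ (fun i => ?_) i
        · simp
        · simpa using h3 i
    · intro f hf
      simp only [Finset.mem_filter, mem_monoSet] at hf
      have hl : f (Fin.last n) = N + 1 := by
        have := hf.1.2.2 (Fin.last n)
        omega
      funext i
      refine Fin.lastCases ?_ (fun i => ?_) i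
      · simp [hl]
      · simp
    · intro g hg
      funext i
      simp
    · intro f hf
      simp only [Finset.mem_filter, mem_monoSet] at hf
      have hl : f (Fin.last n) = N + 1 := by
        have := hf.1.2.2 (Fin.last n)
        omega
      rw [Fin.prod_univ_castSucc, hl, mul_comm]

/-- The entry `ζ^{N⋆}(a_{-j}, …, a_{L-1})`, indexed by its end `L` and the column `j`. -/
def hStar (a : ℤ → ℂ) (N : ℕ) (L : ℤ) (j : ℕ) : ℂ :=
  SMZ.mzvStarNSeq N a (-(j : ℤ)) (L + j)

lemma hStar_of_neg (a : ℤ → ℂ) (N : ℕ) {L : ℤ} {j : ℕ} (h : L + j < 0) : hStar a N L j = 0 := by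
  simp [hStar, SMZ.mzvStarNSeq, h]

lemma hStar_of_nat (a : ℤ → ℂ) (N : ℕ) {L : ℤ} {j n : ℕ} (h : L + j = n) :
    hStar a N L j = SMZ.mzvStarN N fun i : Fin n => a (-(j : ℤ) + (i : ℕ)) := by
  have h0 : ¬ ((n : ℤ) < 0) := by omega
  rw [hStar, h, SMZ.mzvStarNSeq, if_neg h0]
  rfl

lemma hStar_of_eq_zero (a : ℤ → ℂ) (N : ℕ) {L : ℤ} {j : ℕ} (h : L + j = 0) :
    hStar a N L j = 1 := by
  rw [hStar_of_nat a N (n := 0) (by simpa using h), mzvStarN_eq_sum]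
  have : monoSet N 0 = {Fin.elim0} := by
    ext f
    simp only [mem_monoSet, Finset.mem_singleton]
    exact ⟨fun _ => Subsingleton.elim _ _,
      fun _ => ⟨fun i => i.elim0, fun i => i.elim0, fun i => i.elim0⟩⟩
  rw [this]
  simp

lemma hStar_zero_of_pos (a : ℤ → ℂ) {L : ℤ} {j : ℕ} (h : 0 < L + j) : hStar a 0 L j = 0 := by
  obtain ⟨n, hn⟩ : ∃ n : ℕ, L + j = ((n + 1 : ℕ) : ℤ) := ⟨(L + j - 1).toNat, by omega⟩
  rw [hStar_of_nat a 0 hn, mzvStarN_eq_sum]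
  have : monoSet 0 (n + 1) = ∅ := by
    ext f
    simp only [mem_monoSet, Finset.notMem_empty, iff_false]
    rintro ⟨-, h2, h3⟩
    have := h2 0
    have := h3 0
    omega
  simp [this]

/-- The factor `wt a (N + 1) (L - 1)` does not depend on the column `j`: this is where the
constancy of `s` along diagonals enters. -/
lemma hStar_succ (a : ℤ → ℂ) (N : ℕ) (L : ℤ) (j : ℕ) :
    hStar a (N + 1) L j =
      hStar a N L j + wt a (N + 1) (L - 1) * hStar a (N + 1) (L - 1) j := by
  rcases lt_trichotomy (L + j) 0 with h | h | h
  · rw [hStar_of_neg a _ h, hStar_of_neg a _ h, hStar_of_neg a _ (by omega)]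
    simp
  · rw [hStar_of_eq_zero a _ h, hStar_of_eq_zero a _ h, hStar_of_neg a _ (by omega)]
    simp
  · obtain ⟨n, hn⟩ : ∃ n : ℕ, L + j = ((n + 1 : ℕ) : ℤ) := ⟨(L + j - 1).toNat, by omega⟩
    rw [hStar_of_nat a _ hn, hStar_of_nat a _ hn, hStar_of_nat a (n := n) _ (by omega),
      mzvStarN_succ]
    have : -(j : ℤ) + (n : ℤ) = L - 1 := by omega
    simp [wt, this]

/-- Iteration of `hStar_succ`, from the end `b - i` down to the end `c - i - 1`. -/
lemma hStar_expand (a : ℤ → ℂ) (N i j c b : ℕ) (hcb : c ≤ b) :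
    hStar a (N + 1) ((b : ℤ) - i) j =
      ∑ μ ∈ Finset.Icc c b,
        (∏ k ∈ Finset.Ico μ b, wt a (N + 1) ((k : ℤ) - i)) * hStar a N ((μ : ℤ) - i) j +
      (∏ k ∈ Finset.Ico c b, wt a (N + 1) ((k : ℤ) - i)) * wt a (N + 1) ((c : ℤ) - i - 1) *
        hStar a (N + 1) ((c : ℤ) - i - 1) j := by
  induction b, hcb using Nat.le_induction with
  | base => simpa using hStar_succ a N ((c : ℤ) - i) j
  | succ b hcb ih =>
    rw [hStar_succ]
    have e : ((b + 1 : ℕ) : ℤ) - i - 1 = (b : ℤ) - i := by push_cast; ring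
    rw [e, ih, Finset.sum_Icc_succ_top (by omega),
      Finset.prod_Ico_succ_top hcb]
    have : ∀ μ ∈ Finset.Icc c b,
        (∏ k ∈ Finset.Ico μ (b + 1), wt a (N + 1) ((k : ℤ) - i)) * hStar a N ((μ : ℤ) - i) j =
        wt a (N + 1) ((b : ℤ) - i) *
        ((∏ k ∈ Finset.Ico μ b, wt a (N + 1) ((k : ℤ) - i)) * hStar a N ((μ : ℤ) - i) j) := by
      intro μ hμ
      rw [Finset.prod_Ico_succ_top (Finset.mem_Icc.1 hμ).2]
      ring
    rw [Finset.sum_congr rfl this, ← Finset.mul_sum]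
    simp
    ring

/-! ### Branching rule for the determinant -/

/-- Adding to each row a multiple of the next one does not change the determinant. The rows on
the left are the first `r` terms of a sequence `R` whose `r`-th term vanishes, so that the last row
is unchanged. -/
lemma det_eq_of_row_add_next {r : ℕ} (R : ℕ → Fin r → ℂ) (B : Matrix (Fin r) (Fin r) ℂ)
    (c : ℕ → ℂ) (hr : ∀ j, R r j = 0) (h : ∀ i j : Fin r, R i j = B i j + c i * R (i + 1) j) :
    (Matrix.of fun i j : Fin r => R i j).det = B.det := by
  let U : Matrix (Fin r) (Fin r) ℂ :=
    Matrix.of fun i k => if k = i then 1 else if (k : ℕ) = i + 1 then -c i else 0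
  have hU : U.det = 1 := by
    rw [Matrix.det_of_isUpperTriangular]
    · simp [U]
    · intro i k hik
      have hik' : (k : ℕ) < i := hik
      have h1 : k ≠ i := ne_of_lt hik
      have h2 : (k : ℕ) ≠ i + 1 := by omega
      simp [U, h1, h2]
  have hB : B = U * Matrix.of fun i j : Fin r => R i j := by
    ext i j
    rw [Matrix.mul_apply]
    have hsplit : ∀ k : Fin r, U i k * (Matrix.of fun i j : Fin r => R i j) k j =
        (if k = i then R i j else 0) + (if (k : ℕ) = i + 1 then -c i * R (i + 1) j else 0) := by
      intro k
      by_cases h1 : k = i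
      · subst h1
        simp [U]
      · by_cases h2 : (k : ℕ) = i + 1
        · simp [U, h1, h2]
        · simp [U, h1, h2]
    rw [Finset.sum_congr rfl fun k _ => hsplit k, Finset.sum_add_distrib, h i j]
    by_cases hi : (i : ℕ) + 1 < r
    · have : ∀ k : Fin r, ((k : ℕ) = i + 1) = (k = ⟨i + 1, hi⟩) := by
        intro k
        rw [Fin.ext_iff]
      simp [this]
    · have hir : (i : ℕ) + 1 = r := by omega
      simp [hir, hr]
  rw [hB, Matrix.det_mul, hU, one_mul]

lemma det_sum_rows {r : ℕ} (T : Fin r → Finset ℕ) (w : Fin r → ℕ → ℂ)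
    (v : Fin r → ℕ → Fin r → ℂ) :
    (Matrix.of fun i j : Fin r => ∑ μ ∈ T i, w i μ * v i μ j).det =
      ∑ μ ∈ Fintype.piFinset T, (∏ i, w i (μ i)) * (Matrix.of fun i j => v i (μ i) j).det := by
  have h := (Matrix.detRowAlternating (R := ℂ) (n := Fin r)).toMultilinearMap.map_sum_finset
    (fun i μ => w i μ • v i μ) T
  have e : (Matrix.of fun i j : Fin r => ∑ μ ∈ T i, w i μ * v i μ j) =
      fun i => ∑ μ ∈ T i, w i μ • v i μ := by
    ext i j
    simp
  rw [e]
  refine h.trans (Finset.sum_congr rfl fun μ _ => ?_)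
  rw [MultilinearMap.map_smul_univ]
  rfl

/-- Extension by zero of a shape with `r` rows. -/
def extend {r : ℕ} (μ : Fin r → ℕ) (i : ℕ) : ℕ := if h : i < r then μ ⟨i, h⟩ else 0

/-- The shapes `μ` such that `lam / μ` is a horizontal strip. -/
def strips (r : ℕ) (lam : ℕ → ℕ) : Finset (Fin r → ℕ) :=
  Fintype.piFinset fun i : Fin r => Finset.Icc (lam (i + 1)) (lam i)

/-- The Jacobi–Trudi determinant of a shape `lam` with at most `r` rows. -/
def jtDet (a : ℤ → ℂ) (N r : ℕ) (lam : ℕ → ℕ) : ℂ :=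
  (Matrix.of fun i j : Fin r => hStar a N ((lam i : ℤ) - (i : ℕ)) j).det

/-- The determinant for `N + 1` in terms of determinants for `N`: row reduction, then
multilinearity in the rows. -/
lemma jtDet_succ (a : ℤ → ℂ) (N r : ℕ) (lam : ℕ → ℕ) (hanti : Antitone lam)
    (hzero : ∀ i, r ≤ i → lam i = 0) :
    jtDet a (N + 1) r lam = ∑ μ ∈ strips r lam,
      (∏ i : Fin r, ∏ k ∈ Finset.Ico (μ i) (lam i), wt a (N + 1) ((k : ℤ) - (i : ℕ))) *
        jtDet a N r (extend μ) := by
  have h1 := det_eq_of_row_add_next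
    (fun i (j : Fin r) => hStar a (N + 1) ((lam i : ℤ) - (i : ℕ)) j)
    (Matrix.of fun i j : Fin r => ∑ μ ∈ Finset.Icc (lam (i + 1)) (lam i),
      (∏ k ∈ Finset.Ico μ (lam i), wt a (N + 1) ((k : ℤ) - (i : ℕ))) *
        hStar a N ((μ : ℤ) - (i : ℕ)) j)
    (fun i => (∏ k ∈ Finset.Ico (lam (i + 1)) (lam i), wt a (N + 1) ((k : ℤ) - (i : ℕ))) *
      wt a (N + 1) ((lam (i + 1) : ℤ) - (i : ℕ) - 1))
    (by
      intro j
      apply hStar_of_neg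
      rw [hzero r le_rfl]
      have := j.2
      omega)
    (by
      intro i j
      have := hStar_expand a N i j (lam (i + 1)) (lam i) (hanti (Nat.le_succ _))
      rw [this]
      have e : (lam ((i : ℕ) + 1) : ℤ) - (i : ℕ) - 1 =
          (lam ((i : ℕ) + 1) : ℤ) - (((i : ℕ) + 1 : ℕ) : ℤ) := by
        push_cast; ring
      simp only [Matrix.of_apply, e])
  refine h1.trans ((det_sum_rows (fun i : Fin r => Finset.Icc (lam (i + 1)) (lam i))
    (fun i μ => ∏ k ∈ Finset.Ico μ (lam i), wt a (N + 1) ((k : ℤ) - (i : ℕ)))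
    (fun i μ j => hStar a N ((μ : ℤ) - (i : ℕ)) j)).trans ?_)
  refine Finset.sum_congr rfl fun μ _ => ?_
  simp [jtDet, extend]

/-! ### Branching rule for tableaux -/

lemma ssyt_finite (N r : ℕ) (lam : ℕ → ℕ) (hanti : Antitone lam)
    (hzero : ∀ i, r ≤ i → lam i = 0) :
    {m : ℕ × ℕ → ℕ | SMZ.IsSSYT lam m ∧ ∀ p, m p ≤ N}.Finite := by
  refine Set.Finite.of_finite_image
    (f := fun m => fun p : Fin r × Fin (lam 0) => m ((p.1 : ℕ), (p.2 : ℕ))) ?_ ?_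
  · refine (Set.finite_Iic (fun _ : Fin r × Fin (lam 0) => N)).subset ?_
    rintro _ ⟨m, hm, rfl⟩ p
    exact hm.2 _
  · intro m hm m' hm' h
    funext p
    by_cases hp : SMZ.InDiag lam p
    · have hp' : p.2 < lam p.1 := hp
      have h1 : p.1 < r := by
        by_contra hc
        rw [hzero _ (not_lt.1 hc)] at hp'
        omega
      have h2 : p.2 < lam 0 := hp'.trans_le (hanti (Nat.zero_le _))
      exact congrFun h (⟨p.1, h1⟩, ⟨p.2, h2⟩)
    · rw [hm.1.zero_off p hp, hm'.1.zero_off p hp]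

/-- The semi-standard tableaux of shape `lam` with entries at most `N`; empty when there are
infinitely many, which does not happen for a partition. -/
def ssytSet (N : ℕ) (lam : ℕ → ℕ) : Finset (ℕ × ℕ → ℕ) :=
  open Classical in
  if h : {m : ℕ × ℕ → ℕ | SMZ.IsSSYT lam m ∧ ∀ p, m p ≤ N}.Finite then h.toFinset else ∅

lemma mem_ssytSet {N r : ℕ} {lam : ℕ → ℕ} (hanti : Antitone lam)
    (hzero : ∀ i, r ≤ i → lam i = 0) {m : ℕ × ℕ → ℕ} :
    m ∈ ssytSet N lam ↔ SMZ.IsSSYT lam m ∧ ∀ p, m p ≤ N := by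
  rw [ssytSet, dif_pos (ssyt_finite N r lam hanti hzero), Set.Finite.mem_toFinset]
  rfl

/-- The weight of a tableau `m` of shape `lam`: the product of the weights of its entries. -/
def tabWt (a : ℤ → ℂ) (r : ℕ) (lam : ℕ → ℕ) (m : ℕ × ℕ → ℕ) : ℂ :=
  ∏ i : Fin r, ∏ k ∈ Finset.range (lam i), wt a (m (i, k)) ((k : ℤ) - (i : ℕ))

/-- The shape formed by the entries at most `N`, as row lengths; `lt_shape_iff` shows that these
entries form initial segments of the rows. -/
def shape (N r : ℕ) (lam : ℕ → ℕ) (m : ℕ × ℕ → ℕ) : Fin r → ℕ :=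
  fun i => ((Finset.range (lam i)).filter fun k => m (i, k) ≤ N).card

lemma exists_initial_segment (p : ℕ → Prop) (n : ℕ)
    (hp : ∀ k, k + 1 < n → p (k + 1) → p k) : ∃ c, ∀ k, k < c ↔ k < n ∧ p k := by
  induction n with
  | zero => exact ⟨0, by simp⟩
  | succ n ih =>
    obtain ⟨c, hc⟩ := ih fun k hk => hp k (by omega)
    by_cases hn : p n
    · have hall : ∀ d, d ≤ n → p (n - d) := by
        intro d
        induction d with
        | zero => intro _; simpa using hn
        | succ d ih =>
          intro hd
          apply hp _ (by omega)
          have := ih (by omega)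
          rwa [show n - (d + 1) + 1 = n - d by omega]
      refine ⟨n + 1, fun k => ⟨fun hk => ⟨hk, ?_⟩, fun hk => hk.1⟩⟩
      have := hall (n - k) (by omega)
      rwa [show n - (n - k) = k by omega] at this
    · refine ⟨c, fun k => (hc k).trans ⟨fun h => ⟨by omega, h.2⟩, fun h => ⟨?_, h.2⟩⟩⟩
      have : k ≠ n := by
        rintro rfl
        exact hn h.2
      omega

lemma lt_shape_iff {N r : ℕ} {lam : ℕ → ℕ} {m : ℕ × ℕ → ℕ} (hm : SMZ.IsSSYT lam m)
    (i : Fin r) (k : ℕ) : k < shape N r lam m i ↔ k < lam i ∧ m (i, k) ≤ N := by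
  obtain ⟨c, hc⟩ := exists_initial_segment (fun k => m (i, k) ≤ N) (lam i)
    fun k hk h => (hm.row_le i k hk).trans h
  have : (Finset.range (lam i)).filter (fun k => m (i, k) ≤ N) = Finset.range c := by
    ext k
    simp [hc k]
  rw [shape, this, Finset.card_range, hc]

lemma shape_mem_strips {N r : ℕ} {lam : ℕ → ℕ} (hanti : Antitone lam) {m : ℕ × ℕ → ℕ}
    (hm : SMZ.IsSSYT lam m) (hN : ∀ p, m p ≤ N + 1) : shape N r lam m ∈ strips r lam := by
  simp only [strips, Fintype.mem_piFinset, Finset.mem_Icc]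
  intro i
  constructor
  · -- an entry lying above another one is at most `N`
    by_contra hc
    have hc' : shape N r lam m i < lam (i + 1) := not_le.1 hc
    have h1 := hm.col_lt i (shape N r lam m i) hc'
    have h2 := hN (i + 1, shape N r lam m i)
    have h3 := (lt_shape_iff (N := N) hm i (shape N r lam m i)).2
      ⟨hc'.trans_le (hanti (Nat.le_succ _)), by omega⟩
    exact lt_irrefl _ h3
  · exact (Finset.card_filter_le _ _).trans (by simp)

lemma shape_eq_iff {N r : ℕ} {lam : ℕ → ℕ} (hzero : ∀ i, r ≤ i → lam i = 0) {m : ℕ × ℕ → ℕ}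
    (hm : SMZ.IsSSYT lam m) (μ : Fin r → ℕ) :
    shape N r lam m = μ ↔ ∀ i k, k < extend μ i ↔ k < lam i ∧ m (i, k) ≤ N := by
  constructor
  · rintro rfl i k
    by_cases hi : i < r
    · simpa [extend, hi] using lt_shape_iff hm ⟨i, hi⟩ k
    · simp [extend, hi, hzero i (not_lt.1 hi)]
  · intro h
    funext i
    refine eq_of_forall_lt_iff fun k => ?_
    rw [lt_shape_iff hm]
    simpa [extend] using (h i k).symm

/-- Tableaux of shape `lam` with entries at most `N + 1` in which the entries at most `N` form the
shape `μ` correspond to tableaux of shape `μ` with entries at most `N`: delete the boxes filled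
with `N + 1`. -/
lemma sum_fiber (a : ℤ → ℂ) (N r : ℕ) (lam : ℕ → ℕ) (hanti : Antitone lam)
    (hzero : ∀ i, r ≤ i → lam i = 0) (μ : Fin r → ℕ)
    (hlow : ∀ i, lam (i + 1) ≤ extend μ i) (hup : ∀ i, extend μ i ≤ lam i) :
    ∑ m ∈ (ssytSet (N + 1) lam).filter (fun m => shape N r lam m = μ), tabWt a r lam m =
      (∏ i : Fin r, ∏ k ∈ Finset.Ico (μ i) (lam i), wt a (N + 1) ((k : ℤ) - (i : ℕ))) *
        ∑ m ∈ ssytSet N (extend μ), tabWt a r (extend μ) m := by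
  have hanti' : Antitone (extend μ) :=
    antitone_nat_of_succ_le fun i => (hup (i + 1)).trans (hlow i)
  have hzero' : ∀ i, r ≤ i → extend μ i = 0 := fun i hi => by
    have := hup i
    rw [hzero i hi] at this
    omega
  have hext : ∀ i : Fin r, extend μ i = μ i := fun i => by simp [extend]
  rw [Finset.mul_sum]
  refine Finset.sum_bij' (fun m _ => fun p => if p.2 < extend μ p.1 then m p else 0)
    (fun m _ => fun p => if p.2 < extend μ p.1 then m p else if p.2 < lam p.1 then N + 1 else 0)
    ?_ ?_ ?_ ?_ ?_
  · intro m hm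
    rw [Finset.mem_filter, mem_ssytSet hanti hzero] at hm
    obtain ⟨⟨hS, hN⟩, hsh⟩ := hm
    rw [shape_eq_iff hzero hS] at hsh
    rw [mem_ssytSet hanti' hzero']
    refine ⟨⟨?_, ?_, ?_, ?_⟩, ?_⟩
    · intro p hp
      exact if_neg hp
    · intro p hp
      have hp' : p.2 < extend μ p.1 := hp
      simp only [hp', if_true]
      exact hS.pos p (hp'.trans_le (hup _))
    · intro i j h
      have h' : j + 1 < extend μ i := h
      have h'' : j < extend μ i := by omega
      simp only [h', h'', if_true]
      exact hS.row_le i j (h'.trans_le (hup _))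
    · intro i j h
      have h' : j < extend μ (i + 1) := h
      have h'' : j < extend μ i := h'.trans_le (hanti' (Nat.le_succ _))
      simp only [h', h'', if_true]
      exact hS.col_lt i j (h'.trans_le (hup _))
    · rintro ⟨i, j⟩
      by_cases h : j < extend μ i
      · simp only [h, if_true]
        exact ((hsh i j).1 h).2
      · simp [h]
  · intro m hm
    rw [mem_ssytSet hanti' hzero'] at hm
    obtain ⟨hS, hN⟩ := hm
    rw [Finset.mem_filter, mem_ssytSet hanti hzero]
    have hT : SMZ.IsSSYT lam (fun p => if p.2 < extend μ p.1 then m p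
        else if p.2 < lam p.1 then N + 1 else 0) := by
      refine ⟨?_, ?_, ?_, ?_⟩
      · intro p hp
        have hp' : ¬ p.2 < lam p.1 := hp
        have hp'' : ¬ p.2 < extend μ p.1 := fun h => hp' (h.trans_le (hup _))
        simp only [hp', hp'', if_false]
      · intro p hp
        have hp' : p.2 < lam p.1 := hp
        by_cases h : p.2 < extend μ p.1
        · simp only [h, if_true]
          exact hS.pos p h
        · simp only [h, hp', if_true, if_false]
          omega
      · intro i j h
        have h1 : j + 1 < lam i := h
        have h2 : j < lam i := by omega
        by_cases h3 : j + 1 < extend μ i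
        · have h4 : j < extend μ i := by omega
          simp only [h3, h4, if_true]
          exact hS.row_le i j h3
        · simp only [h3, h1, h2, if_true, if_false]
          have := hN (i, j)
          split_ifs <;> omega
      · intro i j h
        have h1 : j < lam (i + 1) := h
        have h2 : j < extend μ i := h1.trans_le (hlow i)
        by_cases h3 : j < extend μ (i + 1)
        · simp only [h3, h2, if_true]
          exact hS.col_lt i j h3
        · simp only [h3, h2, h1, if_true, if_false]
          have := hN (i, j)
          omega
    refine ⟨⟨hT, ?_⟩, ?_⟩
    · intro p
      have := hN p
      split_ifs <;> omega
    · rw [shape_eq_iff hzero hT]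
      intro i k
      have h1 := hup i
      have h2 := hN (i, k)
      by_cases h : k < extend μ i
      · simp only [h, if_true, true_iff]
        omega
      · by_cases h' : k < lam i
        · simp [h, h']
        · simp [h, h']
  · intro m hm
    rw [Finset.mem_filter, mem_ssytSet hanti hzero] at hm
    obtain ⟨⟨hS, hN⟩, hsh⟩ := hm
    rw [shape_eq_iff hzero hS] at hsh
    funext p
    obtain ⟨i, k⟩ := p
    by_cases h : k < extend μ i
    · simp [h]
    · by_cases h' : k < lam i
      · have h1 := hN (i, k)
        have h2 : ¬ m (i, k) ≤ N := fun h2 => h ((hsh i k).2 ⟨h', h2⟩)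
        simp only [h, h', if_true, if_false]
        omega
      · simp only [h, h', if_false]
        exact (hS.zero_off (i, k) h').symm
  · intro m hm
    rw [mem_ssytSet hanti' hzero'] at hm
    funext p
    by_cases h : p.2 < extend μ p.1
    · simp [h]
    · simp only [h, if_false]
      exact (hm.1.zero_off p h).symm
  · intro m hm
    rw [Finset.mem_filter, mem_ssytSet hanti hzero] at hm
    obtain ⟨⟨hS, hN⟩, hsh⟩ := hm
    rw [shape_eq_iff hzero hS] at hsh
    rw [tabWt, tabWt, ← Finset.prod_mul_distrib]
    refine Finset.prod_congr rfl fun i _ => ?_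
    rw [← Finset.prod_range_mul_prod_Ico _ (hup i), mul_comm, hext]
    congr 1
    · refine Finset.prod_congr rfl fun k hk => ?_
      rw [Finset.mem_Ico] at hk
      have h1 := hN (i, k)
      have h2 : ¬ m (i, k) ≤ N := fun h2 => by
        have := (hsh i k).2 ⟨hk.2, h2⟩
        rw [hext] at this
        omega
      rw [show m (i, k) = N + 1 by omega]
    · refine Finset.prod_congr rfl fun k hk => ?_
      have hk' : k < extend μ i := by
        rw [hext]
        exact Finset.mem_range.1 hk
      simp only [hk', if_true]

/-! ### Induction on the truncation level -/

lemma sum_ssyt_eq_jtDet (a : ℤ → ℂ) (r N : ℕ) (lam : ℕ → ℕ) (hanti : Antitone lam)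
    (hzero : ∀ i, r ≤ i → lam i = 0) :
    ∑ m ∈ ssytSet N lam, tabWt a r lam m = jtDet a N r lam := by
  induction N generalizing lam with
  | zero =>
    by_cases h0 : lam 0 = 0
    · have hl : ∀ i, lam i = 0 := fun i => by
        have := hanti (Nat.zero_le i)
        omega
      have hset : ssytSet 0 lam = {fun _ => 0} := by
        ext m
        rw [mem_ssytSet hanti hzero, Finset.mem_singleton]
        constructor
        · rintro ⟨-, h⟩
          funext p
          have := h p
          omega
        · rintro rfl
          refine ⟨⟨fun _ _ => rfl, ?_, ?_, ?_⟩, fun _ => le_rfl⟩ <;> intros <;>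
            simp_all [SMZ.InDiag]
      have hmat : (Matrix.of fun i j : Fin r => hStar a 0 ((lam i : ℤ) - (i : ℕ)) j) = 1 := by
        ext i j
        rw [Matrix.of_apply, hl, Matrix.one_apply]
        rcases lt_trichotomy (i : ℕ) (j : ℕ) with h | h | h
        · rw [hStar_zero_of_pos a (by omega), if_neg (by rintro rfl; omega)]
        · rw [hStar_of_eq_zero a 0 (by omega), if_pos (Fin.ext h)]
        · rw [hStar_of_neg a 0 (by omega), if_neg (by rintro rfl; omega)]
      rw [hset, jtDet, hmat]
      simp [tabWt, hl]
    · have hr : 0 < r := by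
        by_contra hc
        exact h0 (hzero 0 (by omega))
      have hset : ssytSet 0 lam = ∅ := by
        ext m
        rw [mem_ssytSet hanti hzero]
        simp only [Finset.notMem_empty, iff_false]
        rintro ⟨hS, h⟩
        have h1 := hS.pos (0, 0) (Nat.pos_of_ne_zero h0)
        have h2 := h (0, 0)
        omega
      rw [hset, Finset.sum_empty, jtDet]
      refine (Matrix.det_eq_zero_of_row_eq_zero ⟨0, hr⟩ fun j => ?_).symm
      rw [Matrix.of_apply]
      apply hStar_zero_of_pos
      simp only
      omega
  | succ N ih =>
    classical
    rw [jtDet_succ a N r lam hanti hzero,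
      ← Finset.sum_fiberwise_of_maps_to (t := strips r lam) (g := shape N r lam)]
    · refine Finset.sum_congr rfl fun μ hμ => ?_
      simp only [strips, Fintype.mem_piFinset, Finset.mem_Icc] at hμ
      have hlow : ∀ i, lam (i + 1) ≤ extend μ i := fun i => by
        by_cases hi : i < r
        · simpa [extend, hi] using (hμ ⟨i, hi⟩).1
        · simp [hzero (i + 1) (by omega)]
      have hup : ∀ i, extend μ i ≤ lam i := fun i => by
        by_cases hi : i < r
        · simpa [extend, hi] using (hμ ⟨i, hi⟩).2
        · simp [extend, hi]
      rw [← ih (extend μ) (antitone_nat_of_succ_le fun i => (hup (i + 1)).trans (hlow i))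
        fun i hi => by simp [extend, not_lt.2 hi]]
      exact sum_fiber a N r lam hanti hzero μ hlow hup
    · intro m hm
      rw [mem_ssytSet hanti hzero] at hm
      exact shape_mem_strips hanti hm.1 hm.2

end JT

/-- Truncated Jacobi–Trudi identity of `H`-type, valid for arbitrary complex values on the
diagonals. -/
theorem schurZetaN_jacobiTrudi_H
    (N r : ℕ) (lam : ℕ → ℕ) (hlam : SMZ.IsPartitionWith r lam)
    (s : ℕ × ℕ → ℂ) (a : ℤ → ℂ)
    (hdiag : ∀ p : ℕ × ℕ, SMZ.InDiag lam p → s p = a ((p.2 : ℤ) - (p.1 : ℤ))) :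
    SMZ.schurZetaN N r lam s =
      Matrix.det (Matrix.of fun i j : Fin r =>
        SMZ.mzvStarNSeq N a (-(j : ℕ) : ℤ)
          ((lam (i : ℕ) : ℤ) - ((i : ℕ) : ℤ) + ((j : ℕ) : ℤ))) := by
  have hzero : ∀ i, r ≤ i → lam i = 0 := fun i hi => by
    have := (hlam.2 i).not.2 (not_lt.2 hi)
    omega
  have hsum : SMZ.schurZetaN N r lam s = ∑ m ∈ JT.ssytSet N lam, SMZ.term r lam s m :=
    JT.tsum_eq_sum_of_mem (JT.ssytSet N lam) (fun _ => JT.mem_ssytSet hlam.1 hzero)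
      (SMZ.term r lam s)
  have hterm : ∀ m, SMZ.term r lam s m = JT.tabWt a r lam m := fun m => by
    rw [SMZ.term, Finset.prod_range, JT.tabWt]
    refine Finset.prod_congr rfl fun i _ => Finset.prod_congr rfl fun k hk => ?_
    rw [JT.wt, hdiag (i, k) (Finset.mem_range.1 hk)]
  rw [hsum, Finset.sum_congr rfl fun m _ => hterm m,
    JT.sum_ssyt_eq_jtDet a r N lam hlam.1 hzero]
  rfl
end
end

section
/- Let λ=(λ_1,…,λ_r) be a partition with conjugate λ'=(λ'_1,…,λ'_s), N∈ℕ, and s=(s_{ij})∈T^diag(λ,ℂ) with common diagonal values a_k. Then the truncated Schur multiple zeta value satisfies ζ^N_λ(s) = det[ ζ^N(a_{j−1}, a_{j−2}, …, a_{j−(λ'_i−i+j)}) ]_{1≤i,j≤s}, where the (i,j) entry is understood to be 1 if λ'_i−i+j=0 and 0 if λ'_i−i+j<0. (This truncated Jacobi–Trudi identity of E-type holds for arbitrary complex diagonal values, with no convergence hypothesis.) -/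
/-! The sum over tableaux and the determinant satisfy the same recursion in the bound `N`.

Let `E N j l = ζ^N(a_j, a_{j-1}, …)` with `l` arguments. Isolating the largest summation index gives
`E (N+1) j l = E N j l + (N+1)^(-a_{j-l+1}) * E N j (l-1)` (`mzvNSeqDesc_succ`). In row `i` of the
determinant `l = λ'_i - i + j`, so `j - l + 1` does not depend on the column `j`; multilinearity in
the rows expresses the determinant for `N + 1` as a sum over sets `S` of rows of determinants for `N`
in which `λ'_i` is lowered by one for `i ∈ S` (`shiftDet_succ`). If the lowered sequence is not a
partition, two adjacent rows agree or the last row is zero, and the determinant vanishes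
(`shiftDet_eq_zero`).

On the tableau side, the boxes containing `N + 1` are the bottom boxes of a set `S` of columns, they
form a removable horizontal strip, and their removal leaves an arbitrary tableau with entries at most
`N` (`tabSum_succ`). The box removed from column `i` has content `i - λ'_i + 1`, which matches the
coefficient above. For `N = 0` both sides are `1` for the empty shape and `0` otherwise. -/


open scoped BigOperators

noncomputable section

namespace SMZ

/-! ### Tableaux and the branching rule -/

/-- Column-indexed semistandard tableaux: `mu j` is the length of column `j`, and `m j i` is the
entry in column `j`, row `i`, set to `0` below the end of the column. All entries are `≤ N`. -/
structure IsTab {n : ℕ} (mu : Fin n → ℕ) (N : ℕ) (m : Fin n → ℕ → ℕ) : Prop where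
  off : ∀ j i, mu j ≤ i → m j i = 0
  pos : ∀ j i, i < mu j → 0 < m j i
  le : ∀ j i, m j i ≤ N
  col : ∀ j i i', i < i' → i' < mu j → m j i < m j i'
  row : ∀ j j' i, j ≤ j' → i < mu j' → m j i ≤ m j' i

theorem finite_isTab {n : ℕ} (mu : Fin n → ℕ) (N : ℕ) : {m | IsTab mu N m}.Finite := by
  rw [Set.finite_def]
  refine ⟨@Fintype.ofFinite _ ?_⟩
  refine Finite.of_injective (β := ∀ j : Fin n, Fin (mu j) → Fin (N + 1))
    (fun m j i => ⟨m.1 j i, Nat.lt_succ_of_le (m.2.le j i)⟩) ?_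
  rintro ⟨m, hm⟩ ⟨m', hm'⟩ h
  apply Subtype.ext
  funext j i
  by_cases hi : i < mu j
  · simpa using congrArg Fin.val (congrFun (congrFun h j) ⟨i, hi⟩)
  · exact (hm.off j i (by omega)).trans (hm'.off j i (by omega)).symm

/-- The finite set of column-indexed tableaux with entries at most `N`. -/
def tabs {n : ℕ} (mu : Fin n → ℕ) (N : ℕ) : Finset (Fin n → ℕ → ℕ) :=
  (finite_isTab mu N).toFinset

theorem mem_tabs {n : ℕ} {mu : Fin n → ℕ} {N : ℕ} {m : Fin n → ℕ → ℕ} :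
    m ∈ tabs mu N ↔ IsTab mu N m := by simp [tabs]

/-- The weight of a tableau: an entry `k` in a box of content `c` contributes `w k c`. -/
def tabWeight {n : ℕ} (w : ℕ → ℤ → ℂ) (mu : Fin n → ℕ) (m : Fin n → ℕ → ℕ) : ℂ :=
  ∏ j : Fin n, ∏ i ∈ Finset.range (mu j), w (m j i) ((j : ℕ) - (i : ℤ))

/-- The generating function of tableaux with column lengths `mu` and entries at most `N`. -/
def tabSum {n : ℕ} (w : ℕ → ℤ → ℂ) (mu : Fin n → ℕ) (N : ℕ) : ℂ :=
  ∑ m ∈ tabs mu N, tabWeight w mu m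

/-- Column lengths after deleting the bottom box of every column in `S`. -/
def strip {n : ℕ} (mu : Fin n → ℕ) (S : Finset (Fin n)) : Fin n → ℕ :=
  fun j => mu j - if j ∈ S then 1 else 0

/-- The bottom boxes of the columns in `S` exist and form a removable horizontal strip. -/
def Removable {n : ℕ} (mu : Fin n → ℕ) (S : Finset (Fin n)) : Prop :=
  (∀ j ∈ S, 0 < mu j) ∧ Antitone (strip mu S)

open Classical in
/-- The columns of `m` that contain the entry `K`. -/
def colsWith {n : ℕ} (K : ℕ) (m : Fin n → ℕ → ℕ) : Finset (Fin n) :=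
  Finset.univ.filter fun j => ∃ i, m j i = K

theorem mem_colsWith {n : ℕ} {K : ℕ} {m : Fin n → ℕ → ℕ} {j : Fin n} :
    j ∈ colsWith K m ↔ ∃ i, m j i = K := by simp [colsWith]

/-- The largest possible entry occurs only at the bottom of a column, by strictness. -/
theorem IsTab.eq_top {n : ℕ} {mu : Fin n → ℕ} {N : ℕ} {m : Fin n → ℕ → ℕ}
    (h : IsTab mu (N + 1) m) {j : Fin n} {i : ℕ} (hi : m j i = N + 1) : i + 1 = mu j := by
  have h1 : i < mu j := by
    by_contra hc
    have := h.off j i (by omega)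
    omega
  by_contra hne
  have h2 := h.col j i (i + 1) (by omega) (by omega)
  have h3 := h.le j (i + 1)
  omega

theorem IsTab.removable {n : ℕ} {mu : Fin n → ℕ} {N : ℕ} {m : Fin n → ℕ → ℕ}
    (hmu : Antitone mu) (h : IsTab mu (N + 1) m) : Removable mu (colsWith (N + 1) m) := by
  refine ⟨fun j hj => ?_, fun j j' hjj => ?_⟩
  · obtain ⟨i, hi⟩ := mem_colsWith.1 hj
    have := h.eq_top hi
    omega
  · have h0 := hmu hjj
    by_cases hj : j ∈ colsWith (N + 1) m
    · obtain ⟨i, hi⟩ := mem_colsWith.1 hj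
      have h1 := h.eq_top hi
      by_cases hj' : j' ∈ colsWith (N + 1) m
      · simp only [strip, hj, hj', if_true]
        omega
      · -- if both columns had the same length, weak increase along the bottom row would
        -- force the entry `N + 1` into column `j'` as well
        have h2 : mu j' ≠ mu j := by
          intro he
          have h3 := h.row j j' i hjj (by omega)
          have h4 := h.le j' i
          exact hj' (mem_colsWith.2 ⟨i, by omega⟩)
        simp only [strip, hj, hj', if_true, if_false]
        omega
    · simp only [strip, hj, if_false]
      omega

/-- Delete all entries `N + 1`. -/
def eraseTop {n : ℕ} (N : ℕ) (m : Fin n → ℕ → ℕ) : Fin n → ℕ → ℕ :=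
  fun j i => if m j i = N + 1 then 0 else m j i

/-- Put the entry `N + 1` into the bottom box of every column in `S`. -/
def addTop {n : ℕ} (mu : Fin n → ℕ) (S : Finset (Fin n)) (N : ℕ) (m : Fin n → ℕ → ℕ) :
    Fin n → ℕ → ℕ :=
  fun j i => if j ∈ S ∧ i + 1 = mu j then N + 1 else m j i

theorem IsTab.eraseTop {n : ℕ} {mu : Fin n → ℕ} {N : ℕ} {m : Fin n → ℕ → ℕ}
    (h : IsTab mu (N + 1) m) : IsTab (strip mu (colsWith (N + 1) m)) N (eraseTop N m) := by
  have key : ∀ j i, i < strip mu (colsWith (N + 1) m) j ↔ i < mu j ∧ m j i ≠ N + 1 := by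
    intro j i
    unfold strip
    split_ifs with hj
    · obtain ⟨i', hi'⟩ := mem_colsWith.1 hj
      have h1 := h.eq_top hi'
      constructor
      · intro h2
        refine ⟨by omega, fun h3 => ?_⟩
        have := h.eq_top h3
        omega
      · rintro ⟨h2, h3⟩
        have : i ≠ i' := by rintro rfl; exact h3 hi'
        omega
    · have : m j i ≠ N + 1 := fun h3 => hj (mem_colsWith.2 ⟨i, h3⟩)
      simp [this]
  have val : ∀ j i, i < strip mu (colsWith (N + 1) m) j → SMZ.eraseTop N m j i = m j i := by
    intro j i hi
    simp [SMZ.eraseTop, ((key j i).1 hi).2]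
  refine ⟨fun j i hi => ?_, fun j i hi => ?_, fun j i => ?_, fun j i i' hii hi' => ?_,
    fun j j' i hj hi => ?_⟩
  · have h1 := (not_congr (key j i)).1 (by omega)
    unfold SMZ.eraseTop
    split_ifs with h2
    · rfl
    · exact h.off j i (by by_contra hc; exact h1 ⟨by omega, h2⟩)
  · rw [val j i hi]
    exact h.pos j i ((key j i).1 hi).1
  · unfold SMZ.eraseTop
    have := h.le j i
    split_ifs <;> omega
  · rw [val j i (by omega), val j i' hi']
    exact h.col j i i' hii ((key j i').1 hi').1
  · rw [val j' i hi]
    have := h.row j j' i hj ((key j' i).1 hi).1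
    unfold SMZ.eraseTop
    split_ifs <;> omega

theorem strip_eq_pred {n : ℕ} {mu : Fin n → ℕ} {S : Finset (Fin n)} (hS : Removable mu S)
    {j : Fin n} (hj : j ∈ S) : strip mu S j + 1 = mu j := by
  have := hS.1 j hj
  simp only [strip, hj, if_true]
  omega

theorem strip_eq_self {n : ℕ} {mu : Fin n → ℕ} {S : Finset (Fin n)}
    {j : Fin n} (hj : j ∉ S) : strip mu S j = mu j := by simp [strip, hj]

theorem IsTab.addTop {n : ℕ} {mu : Fin n → ℕ} {S : Finset (Fin n)}
    (hS : Removable mu S) {N : ℕ} {m : Fin n → ℕ → ℕ}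
    (h : IsTab (strip mu S) N m) : IsTab mu (N + 1) (addTop mu S N m) := by
  have key : ∀ j i, i < mu j → ¬ (j ∈ S ∧ i + 1 = mu j) → i < strip mu S j := by
    intro j i hi hn
    by_cases hj : j ∈ S
    · have := strip_eq_pred hS hj
      have : i + 1 ≠ mu j := fun h => hn ⟨hj, h⟩
      omega
    · rwa [strip_eq_self hj]
  have le' : ∀ j, strip mu S j ≤ mu j := fun j => Nat.sub_le _ _
  refine ⟨fun j i hi => ?_, fun j i hi => ?_, fun j i => ?_, fun j i i' hii hi' => ?_,
    fun j j' i hj hi => ?_⟩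
  · have := le' j
    rw [SMZ.addTop, if_neg (by omega)]
    exact h.off j i (by omega)
  · unfold SMZ.addTop
    split_ifs with hc
    · omega
    · exact h.pos j i (key j i hi hc)
  · have := h.le j i
    unfold SMZ.addTop
    split_ifs <;> omega
  · have h1 := h.le j i
    unfold SMZ.addTop
    rw [if_neg (by omega)]
    split_ifs with hc
    · omega
    · exact h.col j i i' hii (key j i' hi' hc)
  · have h1 := h.le j i
    unfold SMZ.addTop
    by_cases hc' : j' ∈ S ∧ i + 1 = mu j'
    · rw [if_pos hc']
      split_ifs <;> omega
    · have hi' := key j' i hi hc'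
      have h2 := hS.2 hj
      have hc : ¬ (j ∈ S ∧ i + 1 = mu j) := by
        rintro ⟨ha, hb⟩
        have := strip_eq_pred hS ha
        omega
      rw [if_neg hc, if_neg hc']
      exact h.row j j' i hj hi'

theorem colsWith_addTop {n : ℕ} {mu : Fin n → ℕ} {S : Finset (Fin n)}
    (hS : Removable mu S) {N : ℕ} {m : Fin n → ℕ → ℕ}
    (h : IsTab (strip mu S) N m) : colsWith (N + 1) (addTop mu S N m) = S := by
  ext j
  rw [mem_colsWith]
  constructor
  · rintro ⟨i, hi⟩
    by_contra hj
    have := h.le j i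
    simp only [addTop, hj, false_and, if_false] at hi
    omega
  · intro hj
    exact ⟨mu j - 1, if_pos ⟨hj, by have := hS.1 j hj; omega⟩⟩

theorem eraseTop_addTop {n : ℕ} {mu : Fin n → ℕ} {S : Finset (Fin n)}
    (hS : Removable mu S) {N : ℕ} {m : Fin n → ℕ → ℕ}
    (h : IsTab (strip mu S) N m) : eraseTop N (addTop mu S N m) = m := by
  funext j i
  have := h.le j i
  unfold eraseTop addTop
  by_cases hc : j ∈ S ∧ i + 1 = mu j
  · have h1 := strip_eq_pred hS hc.1
    have h2 := h.off j i (by omega)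
    simp [hc, h2]
  · rw [if_neg hc, if_neg (by omega)]

theorem addTop_eraseTop {n : ℕ} {mu : Fin n → ℕ} {N : ℕ} {m : Fin n → ℕ → ℕ}
    (h : IsTab mu (N + 1) m) : addTop mu (colsWith (N + 1) m) N (eraseTop N m) = m := by
  funext j i
  unfold eraseTop addTop
  by_cases hc : m j i = N + 1
  · rw [if_pos ⟨mem_colsWith.2 ⟨i, hc⟩, h.eq_top hc⟩, hc]
  · simp only [if_neg hc]
    rw [if_neg]
    rintro ⟨hj, hi⟩
    obtain ⟨i', hi'⟩ := mem_colsWith.1 hj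
    have h1 := h.eq_top hi'
    obtain rfl : i = i' := by omega
    exact hc hi'

theorem tabWeight_addTop {n : ℕ} (w : ℕ → ℤ → ℂ) {mu : Fin n → ℕ} {S : Finset (Fin n)}
    (hS : Removable mu S) (N : ℕ) (m : Fin n → ℕ → ℕ) :
    tabWeight w mu (addTop mu S N m) =
      (∏ j : Fin n, if j ∈ S then w (N + 1) ((j : ℕ) - (mu j : ℤ) + 1) else 1) *
        tabWeight w (strip mu S) m := by
  unfold tabWeight
  rw [← Finset.prod_mul_distrib]
  refine Finset.prod_congr rfl fun j _ => ?_
  by_cases hj : j ∈ S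
  · have h1 := strip_eq_pred hS hj
    rw [if_pos hj, ← h1, Finset.prod_range_succ, mul_comm]
    congr 1
    · have : addTop mu S N m j (strip mu S j) = N + 1 := if_pos ⟨hj, h1⟩
      rw [this]
      congr 1
      push_cast
      ring
    · refine Finset.prod_congr rfl fun i hi => ?_
      rw [Finset.mem_range] at hi
      rw [addTop, if_neg (by omega)]
  · rw [if_neg hj, one_mul, strip_eq_self hj]
    refine Finset.prod_congr rfl fun i hi => ?_
    rw [addTop, if_neg (fun h => hj h.1)]

open Classical in
/-- Branching rule: the boxes filled with `N + 1` form a removable horizontal strip, and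
deleting them leaves an arbitrary tableau with entries at most `N`. -/
theorem tabSum_succ {n : ℕ} (w : ℕ → ℤ → ℂ) {mu : Fin n → ℕ} (hmu : Antitone mu) (N : ℕ) :
    tabSum w mu (N + 1) = ∑ S : Finset (Fin n), if Removable mu S then
      (∏ j : Fin n, if j ∈ S then w (N + 1) ((j : ℕ) - (mu j : ℤ) + 1) else 1) *
        tabSum w (strip mu S) N else 0 := by
  rw [tabSum, ← Finset.sum_fiberwise (tabs mu (N + 1)) (colsWith (N + 1))]
  refine Finset.sum_congr rfl fun S _ => ?_
  split_ifs with hS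
  · rw [tabSum, Finset.mul_sum]
    refine Finset.sum_nbij' (eraseTop N) (addTop mu S N) ?_ ?_ ?_ ?_ ?_
    · intro m hm
      obtain ⟨h1, rfl⟩ := Finset.mem_filter.1 hm
      exact mem_tabs.2 (mem_tabs.1 h1).eraseTop
    · intro m hm
      rw [mem_tabs] at hm
      exact Finset.mem_filter.2 ⟨mem_tabs.2 (hm.addTop hS), colsWith_addTop hS hm⟩
    · intro m hm
      obtain ⟨h1, rfl⟩ := Finset.mem_filter.1 hm
      exact addTop_eraseTop (mem_tabs.1 h1)
    · intro m hm
      exact eraseTop_addTop hS (mem_tabs.1 hm)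
    · intro m hm
      obtain ⟨h1, rfl⟩ := Finset.mem_filter.1 hm
      rw [← tabWeight_addTop w hS, addTop_eraseTop (mem_tabs.1 h1)]
  · rw [Finset.filter_eq_empty_iff.2, Finset.sum_empty]
    rintro m hm rfl
    exact hS ((mem_tabs.1 hm).removable hmu)

theorem tabSum_zero {n : ℕ} (w : ℕ → ℤ → ℂ) (mu : Fin n → ℕ) :
    tabSum w mu 0 = if ∀ j, mu j = 0 then 1 else 0 := by
  split_ifs with h
  · have : tabs mu 0 = {fun _ _ => 0} := by
      ext m
      rw [mem_tabs, Finset.mem_singleton]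
      constructor
      · intro hm
        funext j i
        exact Nat.le_zero.1 (hm.le j i)
      · rintro rfl
        constructor <;> simp [h]
    simp [tabSum, this, tabWeight, h]
  · have : tabs mu 0 = ∅ := by
      ext m
      simp only [mem_tabs, Finset.notMem_empty, iff_false]
      intro hm
      push Not at h
      obtain ⟨j, hj⟩ := h
      have h1 := hm.pos j 0 (by omega)
      have h2 := hm.le j 0
      omega
    simp [tabSum, this]

/-! ### The determinant -/

/-- The determinant with rows `j ↦ E N j (p i + j)`. The rows are indexed by the shifted
column lengths `p i = mu i - i`. -/
def shiftDet {n : ℕ} (E : ℕ → ℕ → ℤ → ℂ) (N : ℕ) (p : Fin n → ℤ) : ℂ :=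
  Matrix.det (Matrix.of fun i j : Fin n => E N j (p i + (j : ℕ)))

/-- Expansion of the determinant under the recursion for `E`. The recursion coefficient is the
same along each row, so multilinearity in the rows applies. -/
theorem shiftDet_succ {n : ℕ} (w : ℕ → ℤ → ℂ) (E : ℕ → ℕ → ℤ → ℂ)
    (hrec : ∀ N j l, E (N + 1) j l = E N j l + w (N + 1) (j - l + 1) * E N j (l - 1))
    (N : ℕ) (p : Fin n → ℤ) :
    shiftDet E (N + 1) p = ∑ S : Finset (Fin n),
      (∏ j : Fin n, if j ∈ S then w (N + 1) (-(p j) + 1) else 1) *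
        shiftDet E N (fun j => p j - if j ∈ S then 1 else 0) := by
  have h1 : (Matrix.of fun i j : Fin n => E (N + 1) j (p i + (j : ℕ))) =
      (fun (i j : Fin n) => w (N + 1) (-(p i) + 1) * E N j (p i - 1 + (j : ℕ))) +
      (fun (i j : Fin n) => E N j (p i + (j : ℕ))) := by
    funext i j
    simp only [Matrix.of_apply, Pi.add_apply]
    rw [hrec, add_comm]
    congr 3 <;> ring
  have h2 := (Matrix.detRowAlternating (n := Fin n) (R := ℂ)).toMultilinearMap.map_add_univ
    (fun (i j : Fin n) => w (N + 1) (-(p i) + 1) * E N j (p i - 1 + (j : ℕ)))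
    (fun (i j : Fin n) => E N j (p i + (j : ℕ)))
  unfold shiftDet
  rw [h1]
  refine h2.trans (Finset.sum_congr rfl fun S _ => ?_)
  rw [← Matrix.det_mul_column]
  change Matrix.det _ = _
  congr 1
  funext i j
  by_cases hi : i ∈ S <;> simp [Finset.piecewise, hi]

theorem shiftDet_zero {n : ℕ} (E : ℕ → ℕ → ℤ → ℂ)
    (hzero : ∀ j l, E 0 j l = if l = 0 then 1 else 0) {mu : Fin n → ℕ} (hmu : Antitone mu) :
    shiftDet E 0 (fun i => (mu i : ℤ) - (i : ℕ)) = if ∀ j, mu j = 0 then 1 else 0 := by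
  unfold shiftDet
  split_ifs with h
  · rw [← Matrix.det_one (n := Fin n)]
    congr 1
    ext i j
    rw [Matrix.of_apply, hzero, Matrix.one_apply]
    refine if_congr ?_ rfl rfl
    simp only [h i]
    rw [Fin.ext_iff]
    omega
  · push Not at h
    obtain ⟨j, hj⟩ := h
    have hn : 0 < n := j.pos
    refine Matrix.det_eq_zero_of_row_eq_zero ⟨0, hn⟩ fun k => ?_
    have : mu j ≤ mu ⟨0, hn⟩ := hmu (Nat.zero_le _)
    rw [Matrix.of_apply, hzero, if_neg]
    simp only
    omega

/-- Determinants for non-removable strips vanish: either two adjacent rows coincide, or the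
last row is zero. -/
theorem shiftDet_eq_zero {n : ℕ} (E : ℕ → ℕ → ℤ → ℂ)
    (hneg : ∀ N j l, l < 0 → E N j l = 0) (N : ℕ) {mu : Fin n → ℕ} (hmu : Antitone mu)
    {S : Finset (Fin n)} (hS : ¬ Removable mu S) :
    shiftDet E N (fun i => (mu i : ℤ) - (i : ℕ) - if i ∈ S then 1 else 0) = 0 := by
  obtain _ | n := n
  · exact absurd ⟨fun j => j.elim0, fun j => j.elim0⟩ hS
  by_cases hanti : ∀ i : Fin n, i.castSucc ∈ S → i.succ ∉ S → mu i.castSucc ≠ mu i.succ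
  · by_cases hl : Fin.last n ∈ S ∧ mu (Fin.last n) = 0
    · refine Matrix.det_eq_zero_of_row_eq_zero (Fin.last n) fun k => ?_
      rw [Matrix.of_apply]
      apply hneg
      simp only [hl.1, hl.2, if_true, Fin.val_last]
      have := k.is_lt
      omega
    · exfalso
      apply hS
      have hZ : Antitone fun j => (mu j : ℤ) - if j ∈ S then 1 else 0 := by
        rw [Fin.antitone_iff_succ_le]
        intro i
        have h1 := hanti i
        have h2 : mu i.succ ≤ mu i.castSucc := hmu (Fin.castSucc_lt_succ).le
        by_cases ha : i.castSucc ∈ S <;> by_cases hb : i.succ ∈ S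
        · simp [ha, hb]; omega
        · have := h1 ha hb
          simp [ha, hb]; omega
        · simp [ha, hb]; omega
        · simp [ha, hb]; omega
      have hpos : ∀ j ∈ S, 0 < mu j := by
        intro j hj
        by_contra hc
        have h3 := hZ (Fin.le_last j)
        have h4 := hmu (Fin.le_last j)
        simp only [hj, if_true] at h3
        split_ifs at h3 with h5
        · exact hl ⟨h5, by omega⟩
        · omega
      refine ⟨hpos, fun i j hij => ?_⟩
      have h3 := hZ hij
      have hi := hpos i
      have hj := hpos j
      simp only [strip]
      simp only at h3
      split_ifs at h3 ⊢ <;> simp_all <;> omega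
  · push Not at hanti
    obtain ⟨i, h1, h2, h3⟩ := hanti
    refine Matrix.det_zero_of_row_eq (i := i.castSucc) (j := i.succ)
      (Fin.castSucc_lt_succ).ne ?_
    funext k
    simp only [Matrix.of_apply, h1, h2, h3, if_true, if_false, Fin.val_castSucc, Fin.val_succ]
    congr 1
    push_cast
    ring

/-- Dual Jacobi–Trudi identity for tableaux weighted by content, by induction on the bound on
the entries: both sides obey the same branching rule. -/
theorem tabSum_eq_shiftDet {n : ℕ} (w : ℕ → ℤ → ℂ) (E : ℕ → ℕ → ℤ → ℂ)
    (hneg : ∀ N j l, l < 0 → E N j l = 0)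
    (hzero : ∀ j l, E 0 j l = if l = 0 then 1 else 0)
    (hrec : ∀ N j l, E (N + 1) j l = E N j l + w (N + 1) (j - l + 1) * E N j (l - 1))
    (N : ℕ) (mu : Fin n → ℕ) (hmu : Antitone mu) :
    tabSum w mu N = shiftDet E N (fun i => (mu i : ℤ) - (i : ℕ)) := by
  classical
  induction N generalizing mu with
  | zero => rw [tabSum_zero, shiftDet_zero E hzero hmu]
  | succ N ih =>
    rw [tabSum_succ w hmu, shiftDet_succ w E hrec]
    refine Finset.sum_congr rfl fun S _ => ?_
    split_ifs with hS
    · rw [ih _ hS.2]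
      congr 1
      · refine Finset.prod_congr rfl fun j _ => ?_
        congr 2
        ring
      · congr 1
        funext j
        by_cases hj : j ∈ S
        · have := strip_eq_pred hS hj
          simp only [hj, if_true]
          omega
        · simp only [strip_eq_self hj, hj, if_false]
          ring
    · rw [shiftDet_eq_zero E hneg N hmu hS, mul_zero]

/-! ### Truncated multiple zeta values -/

theorem finite_chains (N n : ℕ) :
    {f : Fin n → ℕ | StrictMono f ∧ (∀ i, 0 < f i) ∧ ∀ i, f i ≤ N}.Finite :=
  (Set.finite_Iic (fun _ : Fin n => N)).subset fun _ hf i => hf.2.2 i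

/-- The index set of the sum `ζ^N` of depth `n`. -/
def chains (N n : ℕ) : Finset (Fin n → ℕ) := (finite_chains N n).toFinset

theorem mem_chains {N n : ℕ} {f : Fin n → ℕ} :
    f ∈ chains N n ↔ StrictMono f ∧ (∀ i, 0 < f i) ∧ ∀ i, f i ≤ N := by simp [chains]

theorem mzvN_eq_sum (N : ℕ) {n : ℕ} (s : Fin n → ℂ) :
    mzvN N s = ∑ f ∈ chains N n, ∏ i, (f i : ℂ) ^ (-(s i)) := by
  rw [← Finset.tsum_subtype]
  exact Equiv.tsum_eq (Equiv.subtypeEquivRight fun f => mem_chains.symm)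
    (fun f : {f // f ∈ chains N n} => ∏ i, (f.1 i : ℂ) ^ (-(s i)))

theorem mzvN_depth_zero (N : ℕ) (s : Fin 0 → ℂ) : mzvN N s = 1 := by
  have : chains N 0 = {Fin.elim0} := by
    ext f
    rw [mem_chains, Finset.mem_singleton]
    exact ⟨fun _ => Subsingleton.elim _ _,
      fun _ => ⟨fun i => i.elim0, fun i => i.elim0, fun i => i.elim0⟩⟩
  simp [mzvN_eq_sum, this]

theorem mzvN_bound_zero {n : ℕ} (s : Fin (n + 1) → ℂ) : mzvN 0 s = 0 := by
  have : chains 0 (n + 1) = ∅ := by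
    ext f
    simp only [mem_chains, Finset.notMem_empty, iff_false]
    rintro ⟨-, h1, h2⟩
    have := h1 0
    have := h2 0
    omega
  simp [mzvN_eq_sum, this]

/-- Split the sum according to whether the largest summation index equals `N + 1`. -/
theorem mzvN_succ (N : ℕ) {n : ℕ} (s : Fin (n + 1) → ℂ) :
    mzvN (N + 1) s = mzvN N s +
      ((N + 1 : ℕ) : ℂ) ^ (-(s (Fin.last n))) * mzvN N (fun i => s i.castSucc) := by
  rw [mzvN_eq_sum, mzvN_eq_sum, mzvN_eq_sum,
    ← Finset.sum_filter_not_add_sum_filter _ (fun f => f (Fin.last n) = N + 1)]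
  congr 1
  · refine Finset.sum_congr ?_ fun _ _ => rfl
    ext f
    rw [Finset.mem_filter, mem_chains, mem_chains]
    constructor
    · rintro ⟨⟨h1, h2, h3⟩, h4⟩
      refine ⟨h1, h2, fun i => ?_⟩
      have := h1.monotone (Fin.le_last i)
      have := h3 (Fin.last n)
      omega
    · rintro ⟨h1, h2, h3⟩
      have := h3 (Fin.last n)
      exact ⟨⟨h1, h2, fun i => (h3 i).trans (Nat.le_succ N)⟩, by omega⟩
  · rw [Finset.mul_sum]
    refine Finset.sum_nbij' (fun f => fun i => f i.castSucc)
      (fun g => Fin.snoc (α := fun _ => ℕ) g (N + 1)) ?_ ?_ ?_ ?_ ?_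
    · intro f hf
      rw [Finset.mem_filter, mem_chains] at hf
      obtain ⟨⟨h1, h2, h3⟩, h4⟩ := hf
      refine mem_chains.2 ⟨fun i j hij => h1 (Fin.castSucc_lt_castSucc_iff.2 hij),
        fun i => h2 _, fun i => ?_⟩
      have := h1 (Fin.castSucc_lt_last i)
      omega
    · intro g hg
      obtain ⟨h1, h2, h3⟩ := mem_chains.1 hg
      refine Finset.mem_filter.2 ⟨mem_chains.2 ⟨?_, ?_, ?_⟩, by simp⟩
      · rw [Fin.strictMono_iff_lt_succ]
        intro i
        rw [Fin.snoc_castSucc]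
        refine Fin.lastCases (motive := fun k => ∀ i : Fin n, i.succ = k →
          g i < Fin.snoc (α := fun _ => ℕ) g (N + 1) k) ?_ ?_ i.succ i rfl
        · intro i _
          have := h3 i
          rw [Fin.snoc_last]
          omega
        · intro k i hik
          rw [Fin.snoc_castSucc]
          apply h1
          rw [Fin.lt_def]
          have := congrArg Fin.val hik
          simp at this
          omega
      · intro i
        refine Fin.lastCases ?_ (fun i => ?_) i
        · simp
        · simpa using h2 i
      · intro i
        refine Fin.lastCases ?_ (fun i => ?_) i
        · simp
        · have := h3 i
          simp only [Fin.snoc_castSucc]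
          omega
    · intro f hf
      have h4 := (Finset.mem_filter.1 hf).2
      funext i
      refine Fin.lastCases ?_ (fun i => ?_) i
      · simp [h4]
      · simp
    · intro g hg
      funext i
      simp
    · intro f hf
      have h4 := (Finset.mem_filter.1 hf).2
      rw [Fin.prod_univ_castSucc, h4, mul_comm]

theorem mzvNSeqDesc_neg (N : ℕ) (a : ℤ → ℂ) (j l : ℤ) (hl : l < 0) :
    mzvNSeqDesc N a j l = 0 := if_pos hl

theorem mzvNSeqDesc_natCast (N : ℕ) (a : ℤ → ℂ) (j : ℤ) (l : ℕ) :
    mzvNSeqDesc N a j l = mzvN N fun i : Fin l => a (j - (i : ℕ)) := by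
  rw [mzvNSeqDesc, if_neg (by omega)]
  rfl

theorem mzvNSeqDesc_bound_zero (a : ℤ → ℂ) (j l : ℤ) :
    mzvNSeqDesc 0 a j l = if l = 0 then 1 else 0 := by
  obtain hl | hl := lt_or_ge l 0
  · rw [mzvNSeqDesc_neg _ _ _ _ hl, if_neg hl.ne]
  · lift l to ℕ using hl
    rw [mzvNSeqDesc_natCast]
    obtain _ | l := l
    · simp [mzvN_depth_zero]
    · rw [mzvN_bound_zero, if_neg (by omega)]

theorem mzvNSeqDesc_succ (N : ℕ) (a : ℤ → ℂ) (j l : ℤ) :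
    mzvNSeqDesc (N + 1) a j l = mzvNSeqDesc N a j l +
      ((N + 1 : ℕ) : ℂ) ^ (-(a (j - l + 1))) * mzvNSeqDesc N a j (l - 1) := by
  obtain hl | hl := lt_or_ge l 0
  · rw [mzvNSeqDesc_neg _ _ _ _ hl, mzvNSeqDesc_neg _ _ _ _ hl,
      mzvNSeqDesc_neg _ _ _ (l - 1) (by omega)]
    ring
  · lift l to ℕ using hl
    obtain _ | l := l
    · rw [mzvNSeqDesc_neg _ _ _ (_ - 1) (by simp), mzvNSeqDesc_natCast, mzvNSeqDesc_natCast,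
        mzvN_depth_zero, mzvN_depth_zero]
      ring
    · have h1 : ((l + 1 : ℕ) : ℤ) - 1 = (l : ℕ) := by push_cast; ring
      have h2 : j - ((l + 1 : ℕ) : ℤ) + 1 = j - (l : ℕ) := by push_cast; ring
      rw [h1, h2, mzvNSeqDesc_natCast, mzvNSeqDesc_natCast, mzvNSeqDesc_natCast, mzvN_succ]
      rfl

/-! ### From row-indexed to column-indexed tableaux -/

theorem lt_conjPart {r : ℕ} {lam : ℕ → ℕ} (hlam : IsPartitionWith r lam) (i c : ℕ) :
    i < conjPart r lam c ↔ c < lam i := by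
  unfold conjPart
  constructor
  · intro h
    by_contra hc
    have : ((Finset.range r).filter fun k => c < lam k) ⊆ Finset.range i := by
      intro k hk
      rw [Finset.mem_filter] at hk
      rw [Finset.mem_range]
      by_contra hki
      have := hlam.1 (not_lt.1 hki)
      omega
    have := Finset.card_le_card this
    rw [Finset.card_range] at this
    omega
  · intro h
    have : Finset.range (i + 1) ⊆ ((Finset.range r).filter fun k => c < lam k) := by
      intro k hk
      rw [Finset.mem_range] at hk
      have h1 : lam i ≤ lam k := hlam.1 (by omega)
      rw [Finset.mem_filter, Finset.mem_range]
      exact ⟨(hlam.2 k).1 (by omega), by omega⟩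
    have := Finset.card_le_card this
    rw [Finset.card_range] at this
    omega

theorem conjPart_antitone {r : ℕ} {lam : ℕ → ℕ} : Antitone (conjPart r lam) := by
  intro c c' h
  refine Finset.card_le_card fun k hk => ?_
  rw [Finset.mem_filter] at hk ⊢
  exact ⟨hk.1, by omega⟩

/-- Column lengths of `lam`, indexed by its `lam 0` nonempty columns. -/
def colLens (r : ℕ) (lam : ℕ → ℕ) : Fin (lam 0) → ℕ := fun j => conjPart r lam j

/-- Transposing the indexing identifies the two descriptions of tableaux. -/
def ssytEquiv {r : ℕ} {lam : ℕ → ℕ} (hlam : IsPartitionWith r lam) (N : ℕ) :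
    {m : ℕ × ℕ → ℕ // IsSSYT lam m ∧ ∀ p, m p ≤ N} ≃ {m // m ∈ tabs (colLens r lam) N} where
  toFun m := ⟨fun j i => m.1 (i, j), by
    obtain ⟨m, hm, hN⟩ := m
    have hd : ∀ i (j : Fin (lam 0)), i < colLens r lam j ↔ InDiag lam (i, (j : ℕ)) :=
      fun i j => lt_conjPart hlam i j
    rw [mem_tabs]
    refine ⟨fun j i h => ?_, fun j i h => ?_, fun j i => hN _, fun j i i' hii h => ?_,
      fun j j' i hj h => ?_⟩
    · exact hm.zero_off _ (by rw [← hd]; omega)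
    · exact hm.pos _ ((hd _ _).1 h)
    · induction i', hii using Nat.le_induction with
      | base => exact hm.col_lt i j ((hd _ _).1 h)
      | succ k hk ih => exact (ih (by omega)).trans (hm.col_lt k j ((hd _ _).1 h))
    · obtain ⟨j, hjl⟩ := j
      obtain ⟨j', hjl'⟩ := j'
      replace hj : j ≤ j' := hj
      replace h : j' < lam i := (hd _ _).1 h
      show m (i, j) ≤ m (i, j')
      clear hjl hjl'
      induction j', hj using Nat.le_induction with
      | base => exact le_rfl
      | succ k hk ih => exact (ih (by omega)).trans (hm.row_le i k h)⟩
  invFun m := ⟨fun p => if h : p.2 < lam 0 then m.1 ⟨p.2, h⟩ p.1 else 0, by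
    obtain ⟨m, hm⟩ := m
    rw [mem_tabs] at hm
    have hd : ∀ i (j : Fin (lam 0)), i < colLens r lam j ↔ InDiag lam (i, (j : ℕ)) :=
      fun i j => lt_conjPart hlam i j
    have hlt : ∀ p, InDiag lam p → p.2 < lam 0 :=
      fun p hp => lt_of_lt_of_le hp (hlam.1 (Nat.zero_le _))
    refine ⟨⟨fun p hp => ?_, fun p hp => ?_, fun i j hp => ?_, fun i j hp => ?_⟩, fun p => ?_⟩
    · split_ifs with h
      · refine hm.off _ _ ?_
        by_contra hc
        exact hp ((hd p.1 ⟨p.2, h⟩).1 (by omega))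
      · rfl
    · rw [dif_pos (hlt p hp)]
      exact hm.pos _ _ ((hd p.1 ⟨p.2, hlt p hp⟩).2 hp)
    · have h1 := hlt _ hp
      simp only at h1 ⊢
      rw [dif_pos h1, dif_pos (by omega)]
      exact hm.row _ _ _ (Nat.le_succ j) ((hd i ⟨j + 1, h1⟩).2 hp)
    · have h1 := hlt _ hp
      simp only at h1 ⊢
      rw [dif_pos h1, dif_pos h1]
      exact hm.col _ _ _ (Nat.lt_succ_self i) ((hd (i + 1) ⟨j, h1⟩).2 hp)
    · show (if h : p.2 < lam 0 then m ⟨p.2, h⟩ p.1 else 0) ≤ N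
      split_ifs with h
      · exact hm.le _ _
      · exact Nat.zero_le _⟩
  left_inv m := by
    obtain ⟨m, hm, hN⟩ := m
    apply Subtype.ext
    funext p
    show (if h : p.2 < lam 0 then m (p.1, p.2) else 0) = m p
    split_ifs with h
    · rfl
    · refine (hm.zero_off p fun hp => h ?_).symm
      exact lt_of_lt_of_le hp (hlam.1 (Nat.zero_le _))
  right_inv m := by
    apply Subtype.ext
    funext j i
    simp

theorem schurZetaN_eq_tabSum {N r : ℕ} {lam : ℕ → ℕ} (hlam : IsPartitionWith r lam)
    (s : ℕ × ℕ → ℂ) (a : ℤ → ℂ)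
    (hdiag : ∀ p : ℕ × ℕ, InDiag lam p → s p = a ((p.2 : ℤ) - (p.1 : ℤ))) :
    schurZetaN N r lam s = tabSum (fun k c => (k : ℂ) ^ (-(a c))) (colLens r lam) N := by
  rw [tabSum, ← Finset.tsum_subtype, ← (ssytEquiv hlam N).tsum_eq]
  refine tsum_congr fun m => ?_
  unfold term tabWeight
  show _ = ∏ j : Fin (lam 0), ∏ i ∈ Finset.range (conjPart r lam j),
    (m.1 (i, j) : ℂ) ^ (-(a ((j : ℕ) - (i : ℤ))))
  rw [← Finset.prod_range (fun j => ∏ i ∈ Finset.range (conjPart r lam j),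
    (m.1 (i, j) : ℂ) ^ (-(a ((j : ℕ) - (i : ℤ)))))]
  rw [Finset.prod_comm' (t' := Finset.range (lam 0))
    (s' := fun j => Finset.range (conjPart r lam j))]
  · refine Finset.prod_congr rfl fun j _ => Finset.prod_congr rfl fun i hi => ?_
    rw [Finset.mem_range, lt_conjPart hlam] at hi
    rw [hdiag (i, j) hi]
  · intro i j
    simp only [Finset.mem_range, lt_conjPart hlam]
    constructor
    · rintro ⟨-, h⟩
      exact ⟨h, lt_of_lt_of_le h (hlam.1 (Nat.zero_le _))⟩
    · rintro ⟨h, -⟩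
      exact ⟨(hlam.2 i).1 (by omega), h⟩

end SMZ

/-- Truncated Jacobi–Trudi identity of `E`-type, valid for arbitrary complex values on the
diagonals. -/
theorem schurZetaN_jacobiTrudi_E
    (N r : ℕ) (lam : ℕ → ℕ) (hlam : SMZ.IsPartitionWith r lam)
    (s : ℕ × ℕ → ℂ) (a : ℤ → ℂ)
    (hdiag : ∀ p : ℕ × ℕ, SMZ.InDiag lam p → s p = a ((p.2 : ℤ) - (p.1 : ℤ))) :
    SMZ.schurZetaN N r lam s =
      Matrix.det (Matrix.of fun i j : Fin (lam 0) =>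
        SMZ.mzvNSeqDesc N a ((j : ℕ) : ℤ)
          ((SMZ.conjPart r lam (i : ℕ) : ℤ) - ((i : ℕ) : ℤ) + ((j : ℕ) : ℤ))) := by
  rw [SMZ.schurZetaN_eq_tabSum hlam s a hdiag,
    SMZ.tabSum_eq_shiftDet _ (fun N j l => SMZ.mzvNSeqDesc N a (j : ℤ) l)
      (fun N j l => SMZ.mzvNSeqDesc_neg N a j l)
      (fun j l => SMZ.mzvNSeqDesc_bound_zero a j l)
      (fun N j l => SMZ.mzvNSeqDesc_succ N a j l) N
      (SMZ.colLens r lam) (fun _ _ h => SMZ.conjPart_antitone h)]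
  rfl
end
end
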